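/- arXiv:1101.1653 — 2 statements merged into one kernel-verified Lean document; each statement's English description precedes it below -/
import Mathlib

section
/- There exists an absolute constant C > 0 such that for every integer n ≥ 2, ∑_{p prime, p < n} τ(n − p) ≤ C·n, where τ(k) denotes the number of positive divisors of k. -/
open Finset in
theorem abs_card_filter_modEq_dvd_sub_le (n a : ℕ) {d k : ℕ} (hd : 0 < d) (hk : 0 < k)
    (hdk : d.Coprime k) :
    |((((range n).filter (· ≡ a [MOD d])).filter (k ∣ ·)).card : ℝ) - (n / d : ℝ) / k| ≤ 1 := by
  obtain ⟨c, hcd, hck⟩ := Nat.chineseRemainder hdk a 0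
  have hset : ((range n).filter (· ≡ a [MOD d])).filter (k ∣ ·) =
      (range n).filter (· ≡ c [MOD d * k]) := by
    ext m
    rw [mem_filter, mem_filter, mem_filter, and_assoc, ← Nat.modEq_and_modEq_iff_modEq_mul hdk,
      ← Nat.modEq_zero_iff_dvd]
    exact and_congr_right fun _ => and_congr ⟨fun h => h.trans hcd.symm, fun h => h.trans hcd⟩
      ⟨fun h => h.trans hck.symm, fun h => h.trans hck⟩
  have hpos : 0 < d * k := Nat.mul_pos hd hk
  rw [hset, ← Nat.count_eq_card_filter_range, Nat.count_modEq_card n hpos, div_div,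
    ← Nat.cast_mul]
  have h1 := Nat.floor_div_eq_div (K := ℝ) n (d * k)
  have h2 := Nat.floor_le (show (0 : ℝ) ≤ (n : ℝ) / ((d * k : ℕ) : ℝ) by positivity)
  have h3 := Nat.lt_floor_add_one ((n : ℝ) / ((d * k : ℕ) : ℝ))
  rw [h1] at h2 h3
  rw [abs_le]
  push_cast at *
  split_ifs <;> constructor <;> norm_num <;> linarith

theorem sum_Icc_one_inv_sq_le_two (N : ℕ) : ∑ l ∈ Finset.Icc 1 N, ((l : ℝ) ^ 2)⁻¹ ≤ 2 := by
  have h := sum_Ioo_inv_sq_le (α := ℝ) 0 (N + 1)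
  have hset : Finset.Ioo 0 (N + 1) = Finset.Icc 1 N := by
    ext; simp; omega
  rw [hset] at h
  simpa using h

theorem half_le_prod_one_sub_inv_sq {s : Finset ℕ} (hs : ∀ p ∈ s, 2 ≤ p) :
    (1 / 2 : ℝ) ≤ ∏ p ∈ s, (1 - ((p : ℝ) ^ 2)⁻¹) := by
  have hterm : ∀ p : ℕ, 2 ≤ p → 0 ≤ 1 - ((p : ℝ) ^ 2)⁻¹ ∧ 1 - ((p : ℝ) ^ 2)⁻¹ ≤ 1 := by
    intro p hp
    have hp' : (1 : ℝ) ≤ (p : ℝ) ^ 2 := one_le_pow₀ (by exact_mod_cast (by omega : 1 ≤ p))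
    exact ⟨sub_nonneg.2 (inv_le_one_of_one_le₀ hp'), sub_le_self _ (by positivity)⟩
  have hprod : ∀ M : ℕ, 1 ≤ M →
      ∏ j ∈ Finset.Icc 2 M, (1 - ((j : ℝ) ^ 2)⁻¹) = (M + 1) / (2 * M) := by
    intro M hM
    induction M, hM using Nat.le_induction with
    | base => norm_num
    | succ M hM ih =>
      rw [Finset.prod_Icc_succ_top (by omega), ih]
      have : (M : ℝ) ≠ 0 := by positivity
      push_cast
      field_simp
      ring
  set M := s.sup id + 1
  have hsub : s ⊆ Finset.Icc 2 M := fun p hp =>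
    Finset.mem_Icc.2 ⟨hs p hp, (Finset.le_sup (f := id) hp).trans (Nat.le_succ _)⟩
  have hM : (0 : ℝ) < M := by positivity
  calc (1 / 2 : ℝ) ≤ (M + 1) / (2 * M) := by
        rw [div_le_div_iff₀ (by norm_num) (by positivity)]; linarith
    _ = (∏ p ∈ Finset.Icc 2 M \ s, (1 - ((p : ℝ) ^ 2)⁻¹)) * ∏ p ∈ s, (1 - ((p : ℝ) ^ 2)⁻¹) := by
        rw [Finset.prod_sdiff hsub, hprod M (by omega)]
    _ ≤ 1 * ∏ p ∈ s, (1 - ((p : ℝ) ^ 2)⁻¹) := by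
        gcongr
        · exact Finset.prod_nonneg fun p hp => (hterm p (hs p hp)).1
        · have hmem : ∀ p ∈ Finset.Icc 2 M \ s, 2 ≤ p := fun p hp =>
            (Finset.mem_Icc.1 (Finset.mem_sdiff.1 hp).1).1
          exact Finset.prod_le_one (fun p hp => (hterm p (hmem p hp)).1)
            fun p hp => (hterm p (hmem p hp)).2
    _ = _ := one_mul _

theorem totient_eq_mul_prod_real (d : ℕ) :
    (d.totient : ℝ) = d * ∏ p ∈ d.primeFactors, (1 - (p : ℝ)⁻¹) := by
  have h := congrArg (Rat.cast : ℚ → ℝ) (Nat.totient_eq_mul_prod_factors d)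
  push_cast at h
  exact h

theorem inv_totient_le_two_mul_sum_divisors_inv {d : ℕ} (hd : 0 < d) :
    (d.totient : ℝ)⁻¹ ≤ 2 * ((d : ℝ)⁻¹ * ∑ l ∈ d.divisors, (l : ℝ)⁻¹) := by
  have hφ : (0 : ℝ) < d.totient := by exact_mod_cast Nat.totient_pos.2 hd
  have hd' : (0 : ℝ) < d := by exact_mod_cast hd
  have hsum : ∏ p ∈ d.primeFactors, (1 + (p : ℝ)⁻¹) ≤ ∑ l ∈ d.divisors, (l : ℝ)⁻¹ := by
    rw [Finset.prod_one_add]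
    calc ∑ t ∈ d.primeFactors.powerset, ∏ p ∈ t, (p : ℝ)⁻¹
        = ∑ l ∈ d.divisors with Squarefree l, (l : ℝ)⁻¹ := by
          rw [Nat.sum_divisors_filter_squarefree hd.ne']
          refine Finset.sum_congr (by rw [Nat.factors_eq]; rfl) fun t _ => ?_
          rw [Finset.prod_val, Nat.cast_prod, Finset.prod_inv_distrib]
          rfl
      _ ≤ _ := Finset.sum_le_sum_of_subset_of_nonneg (Finset.filter_subset _ _)
          fun _ _ _ => by positivity
  have hhalf := half_le_prod_one_sub_inv_sq (s := d.primeFactors)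
    fun p hp => (Nat.prime_of_mem_primeFactors hp).two_le
  have hnn : 0 ≤ ∏ p ∈ d.primeFactors, (1 - (p : ℝ)⁻¹) := by
    rw [totient_eq_mul_prod_real] at hφ
    exact (pos_of_mul_pos_right hφ hd'.le).le
  have key : (1 / 2 : ℝ) ≤ (∏ p ∈ d.primeFactors, (1 - (p : ℝ)⁻¹)) *
      ∑ l ∈ d.divisors, (l : ℝ)⁻¹ := by
    refine hhalf.trans (le_trans (le_of_eq ?_) (mul_le_mul_of_nonneg_left hsum hnn))
    rw [← Finset.prod_mul_distrib]
    exact Finset.prod_congr rfl fun p _ => by ring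
  rw [inv_le_iff_one_le_mul₀ hφ, totient_eq_mul_prod_real]
  rw [show ∀ a b : ℝ, 2 * ((d : ℝ)⁻¹ * a) * (d * b) = 2 * (b * a) * ((d : ℝ)⁻¹ * d) from
    fun a b => by ring]
  rw [inv_mul_cancel₀ hd'.ne']
  linarith

theorem sum_inv_totient_le (N : ℕ) :
    ∑ d ∈ Finset.Icc 1 N, (d.totient : ℝ)⁻¹ ≤ 4 * ∑ m ∈ Finset.Icc 1 N, (m : ℝ)⁻¹ := by
  have hmult : ∀ l ∈ Finset.Icc 1 N, ∑ d ∈ (Finset.Icc 1 N).filter (l ∣ ·), (d : ℝ)⁻¹ ≤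
      (l : ℝ)⁻¹ * ∑ m ∈ Finset.Icc 1 N, (m : ℝ)⁻¹ := by
    intro l hl
    have hl1 := (Finset.mem_Icc.1 hl).1
    have hsub : (Finset.Icc 1 N).filter (l ∣ ·) ⊆ (Finset.Icc 1 N).image (l * ·) := by
      intro d hd
      obtain ⟨hd, m, rfl⟩ := Finset.mem_filter.1 hd
      obtain ⟨h1, h2⟩ := Finset.mem_Icc.1 hd
      exact Finset.mem_image_of_mem _ (Finset.mem_Icc.2
        ⟨Nat.pos_of_mul_pos_left h1, (Nat.le_mul_of_pos_left m hl1).trans h2⟩)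
    refine (Finset.sum_le_sum_of_subset_of_nonneg hsub fun _ _ _ => by positivity).trans_eq ?_
    rw [Finset.sum_image fun a _ b _ h => Nat.eq_of_mul_eq_mul_left hl1 h, Finset.mul_sum]
    exact Finset.sum_congr rfl fun m _ => by push_cast; rw [mul_inv]
  calc ∑ d ∈ Finset.Icc 1 N, (d.totient : ℝ)⁻¹
      ≤ ∑ d ∈ Finset.Icc 1 N, 2 * ((d : ℝ)⁻¹ * ∑ l ∈ d.divisors, (l : ℝ)⁻¹) :=
        Finset.sum_le_sum fun d hd =>
          inv_totient_le_two_mul_sum_divisors_inv (Finset.mem_Icc.1 hd).1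
    _ = 2 * ∑ l ∈ Finset.Icc 1 N,
          (l : ℝ)⁻¹ * ∑ d ∈ (Finset.Icc 1 N).filter (l ∣ ·), (d : ℝ)⁻¹ := by
        rw [← Finset.mul_sum]
        congr 1
        simp_rw [Finset.mul_sum]
        refine (Finset.sum_comm' (t' := Finset.Icc 1 N)
          (s' := fun l => (Finset.Icc 1 N).filter (l ∣ ·)) fun d l => ?_).trans
          (Finset.sum_congr rfl fun l _ => Finset.sum_congr rfl fun d _ => mul_comm (d : ℝ)⁻¹ (l : ℝ)⁻¹)
        simp only [Finset.mem_Icc, Nat.mem_divisors, Finset.mem_filter]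
        constructor
        · rintro ⟨hd, hl, h0⟩
          exact ⟨⟨hd, hl⟩, Nat.pos_of_dvd_of_pos hl hd.1, (Nat.le_of_dvd hd.1 hl).trans hd.2⟩
        · rintro ⟨⟨hd, hl⟩, -⟩
          exact ⟨hd, hl, by omega⟩
    _ ≤ 2 * ∑ l ∈ Finset.Icc 1 N, (l : ℝ)⁻¹ * ((l : ℝ)⁻¹ * ∑ m ∈ Finset.Icc 1 N, (m : ℝ)⁻¹) := by
        gcongr with l hl
        exact hmult l hl
    _ = 2 * (∑ l ∈ Finset.Icc 1 N, ((l : ℝ) ^ 2)⁻¹) * ∑ m ∈ Finset.Icc 1 N, (m : ℝ)⁻¹ := by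
        rw [mul_assoc, Finset.sum_mul]
        congr 1
        exact Finset.sum_congr rfl fun l _ => by rw [sq, mul_inv, mul_assoc]
    _ ≤ 2 * 2 * ∑ m ∈ Finset.Icc 1 N, (m : ℝ)⁻¹ := by
        gcongr
        exact sum_Icc_one_inv_sq_le_two N
    _ = _ := by norm_num

theorem sum_inv_le_of_primeFactors_subset {N : ℕ} (hN : 0 < N) {K : Finset ℕ}
    (hK : ∀ k ∈ K, k ≠ 0 ∧ k.primeFactors ⊆ N.primeFactors) :
    ∑ k ∈ K, (k : ℝ)⁻¹ ≤ N * (N.totient : ℝ)⁻¹ := by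
  let f : ℕ →* ℝ :=
    { toFun := fun k => (k : ℝ)⁻¹
      map_one' := by simp
      map_mul' := fun a b => by simp [mul_comm] }
  have hf : ∀ {p : ℕ}, p.Prime → ‖f p‖ < 1 := fun {p} hp => by
    have : (1 : ℝ) < p := by exact_mod_cast hp.one_lt
    simpa [f] using inv_lt_one_of_one_lt₀ this
  have hsum := (EulerProduct.summable_and_hasSum_factoredNumbers_prod_filter_prime_geometric
    hf N.primeFactors).2
  have hmem : ∀ k ∈ K, k ∈ Nat.factoredNumbers N.primeFactors := fun k hk =>
    Nat.mem_factoredNumbers_of_primeFactors_subset (hK k hk).1 (hK k hk).2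
  have hle := sum_le_hasSum (K.subtype (· ∈ Nat.factoredNumbers N.primeFactors))
    (fun k _ => by simp only [f, MonoidHom.coe_mk, OneHom.coe_mk]; positivity) hsum
  rw [Finset.sum_subtype_of_mem (fun k => f k) hmem,
    Finset.filter_true_of_mem fun p hp => Nat.prime_of_mem_primeFactors hp] at hle
  refine hle.trans_eq ?_
  rw [totient_eq_mul_prod_real, mul_inv, ← mul_assoc, mul_inv_cancel₀ (by positivity), one_mul,
    Finset.prod_inv_distrib]
  rfl

/-- The squarefree integers in `[1, z]` that are coprime to `d`. -/
def squarefreeCoprime (d z : ℕ) : Finset ℕ :=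
  (Finset.Icc 1 z).filter fun l => Squarefree l ∧ l.Coprime d

theorem mem_squarefreeCoprime {d z l : ℕ} :
    l ∈ squarefreeCoprime d z ↔ (1 ≤ l ∧ l ≤ z) ∧ Squarefree l ∧ l.Coprime d := by
  simp [squarefreeCoprime]

theorem sum_Icc_inv_le_mul_sum_inv_totient {d : ℕ} (hd : 0 < d) (z : ℕ) :
    ∑ k ∈ Finset.Icc 1 z, (k : ℝ)⁻¹ ≤
      d * (d.totient : ℝ)⁻¹ * ∑ l ∈ squarefreeCoprime d z, (l.totient : ℝ)⁻¹ := by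
  let r : ℕ → ℕ := fun k => ∏ p ∈ k.primeFactors \ d.primeFactors, p
  have hprime : ∀ k : ℕ, ∀ p ∈ k.primeFactors \ d.primeFactors, p.Prime := fun k p hp =>
    Nat.prime_of_mem_primeFactors (Finset.mem_sdiff.1 hp).1
  have hr_dvd : ∀ k, r k ∣ k := fun k =>
    (Finset.prod_dvd_prod_of_subset _ _ _ Finset.sdiff_subset).trans (Nat.prod_primeFactors_dvd k)
  have hr_pf : ∀ k : ℕ, (r k).primeFactors = k.primeFactors \ d.primeFactors := fun k =>
    Nat.primeFactors_prod (hprime k)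
  have hr_mem : ∀ k ∈ Finset.Icc 1 z, r k ∈ squarefreeCoprime d z := by
    intro k hk
    obtain ⟨h1, h2⟩ := Finset.mem_Icc.1 hk
    refine mem_squarefreeCoprime.2 ⟨⟨Nat.pos_of_dvd_of_pos (hr_dvd k) h1,
      (Nat.le_of_dvd h1 (hr_dvd k)).trans h2⟩, ?_, ?_⟩
    · refine Finset.squarefree_prod_of_pairwise_isCoprime ?_ fun p hp =>
        (hprime k p hp).prime.squarefree
      intro p hp q hq hpq
      exact Nat.coprime_iff_isRelPrime.1 ((Nat.coprime_primes (hprime k p hp) (hprime k q hq)).2 hpq)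
    · refine Nat.Coprime.prod_left fun p hp => ?_
      rw [(hprime k p hp).coprime_iff_not_dvd]
      intro h
      exact (Finset.mem_sdiff.1 hp).2 (Nat.mem_primeFactors.2 ⟨hprime k p hp, h, hd.ne'⟩)
  rw [← Finset.sum_fiberwise_of_maps_to hr_mem, Finset.mul_sum]
  refine Finset.sum_le_sum fun l hl => ?_
  obtain ⟨⟨hl1, -⟩, -, hcop⟩ := mem_squarefreeCoprime.1 hl
  set K := (Finset.Icc 1 z).filter (fun k => r k = l)
  have hK : ∀ k ∈ K, 1 ≤ k ∧ r k = l := fun k hk =>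
    ⟨(Finset.mem_Icc.1 (Finset.mem_filter.1 hk).1).1, (Finset.mem_filter.1 hk).2⟩
  have hdvd : ∀ k ∈ K, l ∣ k := fun k hk => (hK k hk).2 ▸ hr_dvd k
  have hinj : Set.InjOn (· / l) (K : Set ℕ) := fun a ha b hb hab => by
    rw [← Nat.div_mul_cancel (hdvd a ha), ← Nat.div_mul_cancel (hdvd b hb)]
    exact congrArg (· * l) hab
  have hle := sum_inv_le_of_primeFactors_subset (Nat.mul_pos hd hl1) (K := K.image (· / l)) (by
    intro m hm
    obtain ⟨k, hk, rfl⟩ := Finset.mem_image.1 hm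
    have hk1 := (hK k hk).1
    refine ⟨(Nat.div_pos (Nat.le_of_dvd hk1 (hdvd k hk)) hl1).ne', ?_⟩
    refine (Nat.primeFactors_mono (Nat.div_dvd_of_dvd (hdvd k hk)) (by omega)).trans ?_
    rw [Nat.primeFactors_mul hd.ne' (by omega), ← (hK k hk).2, hr_pf]
    simp)
  rw [Finset.sum_image hinj] at hle
  have hl0 : (l : ℝ) ≠ 0 := by positivity
  calc ∑ k ∈ K, (k : ℝ)⁻¹ = (l : ℝ)⁻¹ * ∑ k ∈ K, ((k / l : ℕ) : ℝ)⁻¹ := by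
        rw [Finset.mul_sum]
        refine Finset.sum_congr rfl fun k hk => ?_
        rw [Nat.cast_div (hdvd k hk) hl0, inv_div, ← mul_div_assoc, inv_mul_cancel₀ hl0, one_div]
    _ ≤ (l : ℝ)⁻¹ * (((d * l : ℕ) : ℝ) * ((d * l).totient : ℝ)⁻¹) := by gcongr
    _ = _ := by
        rw [Nat.totient_mul hcop.symm]
        push_cast
        rw [mul_inv]
        field_simp

theorem sum_divisors_moebius (n : ℕ) :
    ∑ k ∈ n.divisors, (ArithmeticFunction.moebius k : ℝ) = if n = 1 then 1 else 0 := by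
  have h := congrArg (fun f => f n) (ArithmeticFunction.coe_moebius_mul_coe_zeta (R := ℝ))
  simpa only [ArithmeticFunction.coe_mul_zeta_apply, ArithmeticFunction.one_apply,
    ArithmeticFunction.intCoe_apply] using h

theorem sum_moebius_div_of_dvd_closed {L : Finset ℕ} (hpos : ∀ l ∈ L, 0 < l)
    (hL : ∀ l ∈ L, ∀ k, k ∣ l → k ∈ L) {l m : ℕ} (hl : 0 < l) (hm : m ∈ L) :
    ∑ k ∈ L, (if l ∣ k ∧ k ∣ m then (ArithmeticFunction.moebius (m / k) : ℝ) else 0) =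
      if m = l then 1 else 0 := by
  by_cases hlm : l ∣ m
  · obtain ⟨c, rfl⟩ := hlm
    have hc : 0 < c := Nat.pos_of_mul_pos_left (hpos _ hm)
    rw [← Finset.sum_filter]
    have hset : L.filter (fun k => l ∣ k ∧ k ∣ l * c) = c.divisors.image (l * ·) := by
      ext k
      simp only [Finset.mem_filter, Finset.mem_image, Nat.mem_divisors]
      constructor
      · rintro ⟨-, ⟨e, rfl⟩, he⟩
        exact ⟨e, ⟨Nat.dvd_of_mul_dvd_mul_left hl he, hc.ne'⟩, rfl⟩
      · rintro ⟨e, ⟨he, -⟩, rfl⟩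
        have := Nat.mul_dvd_mul_left l he
        exact ⟨hL _ hm _ this, dvd_mul_right _ _, this⟩
    rw [hset, Finset.sum_image fun a _ b _ h => Nat.eq_of_mul_eq_mul_left hl h]
    simp_rw [Nat.mul_div_mul_left _ _ hl]
    rw [Nat.sum_div_divisors c fun k => (ArithmeticFunction.moebius k : ℝ),
      sum_divisors_moebius]
    simp [hl.ne']
  · rw [if_neg (by rintro rfl; exact hlm dvd_rfl)]
    refine Finset.sum_eq_zero fun k _ => if_neg ?_
    exact fun h => hlm (h.1.trans h.2)

/-- The Selberg weights supported on a divisor-closed set `L` of squarefree integers. -/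
theorem exists_selberg_weights {L : Finset ℕ} (hpos : ∀ l ∈ L, 0 < l)
    (hsq : ∀ l ∈ L, Squarefree l) (h1 : 1 ∈ L) (hL : ∀ l ∈ L, ∀ k, k ∣ l → k ∈ L) :
    ∃ w : ℕ → ℝ, w 1 = 1 ∧ (∀ k, |w k| ≤ k) ∧
      ∑ a ∈ L, ∑ b ∈ L, w a * w b * ((a.lcm b : ℕ) : ℝ)⁻¹ =
        (∑ l ∈ L, (l.totient : ℝ)⁻¹)⁻¹ := by
  set S : ℝ := ∑ l ∈ L, (l.totient : ℝ)⁻¹ with hS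
  have hφ : ∀ l ∈ L, (0 : ℝ) < l.totient := fun l hl => by
    exact_mod_cast Nat.totient_pos.2 (hpos l hl)
  have hS0 : 0 < S := Finset.sum_pos (fun l hl => inv_pos.2 (hφ l hl)) ⟨1, h1⟩
  let y : ℕ → ℝ := fun l => ArithmeticFunction.moebius l * ((l.totient : ℝ)⁻¹ * S⁻¹)
  let w : ℕ → ℝ := fun k =>
    k * ∑ m ∈ L, if k ∣ m then (ArithmeticFunction.moebius (m / k) : ℝ) * y m else 0
  have hmu : ∀ l ∈ L, (ArithmeticFunction.moebius l : ℝ) ^ 2 = 1 := fun l hl => by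
    exact_mod_cast ArithmeticFunction.moebius_sq_eq_one_of_squarefree (hsq l hl)
  have hmu_le : ∀ l, |(ArithmeticFunction.moebius l : ℝ)| ≤ 1 := fun l => by
    exact_mod_cast ArithmeticFunction.abs_moebius_le_one (n := l)
  have hdiag : ∀ l ∈ L, ∑ k ∈ L, (if l ∣ k then w k * (k : ℝ)⁻¹ else 0) = y l := by
    intro l hl
    calc ∑ k ∈ L, (if l ∣ k then w k * (k : ℝ)⁻¹ else 0)
        = ∑ k ∈ L, ∑ m ∈ L,
            (if l ∣ k ∧ k ∣ m then (ArithmeticFunction.moebius (m / k) : ℝ) else 0) * y m := by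
          refine Finset.sum_congr rfl fun k hk => ?_
          have hk0 : (k : ℝ) ≠ 0 := by exact_mod_cast (hpos k hk).ne'
          split_ifs with h
          · simp only [w, h, true_and]
            rw [mul_comm, ← mul_assoc, inv_mul_cancel₀ hk0, one_mul]
            exact Finset.sum_congr rfl fun m _ => by split_ifs <;> simp
          · simp [h]
      _ = ∑ m ∈ L, (if m = l then 1 else 0) * y m := by
          rw [Finset.sum_comm]
          refine Finset.sum_congr rfl fun m hm => ?_
          rw [← Finset.sum_mul, sum_moebius_div_of_dvd_closed hpos hL (hpos l hl) hm]
      _ = y l := by simp [hl]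
  refine ⟨w, ?_, fun k => ?_, ?_⟩
  · calc w 1 = ∑ m ∈ L, (m.totient : ℝ)⁻¹ * S⁻¹ := by
          simp only [w, y, Nat.cast_one, one_mul, one_dvd, if_true, Nat.div_one]
          refine Finset.sum_congr rfl fun m hm => ?_
          rw [← mul_assoc, ← sq, hmu m hm, one_mul]
      _ = 1 := by rw [← Finset.sum_mul, mul_inv_cancel₀ hS0.ne']
  · have hsum : |∑ m ∈ L, if k ∣ m then (ArithmeticFunction.moebius (m / k) : ℝ) * y m else 0|
        ≤ ∑ m ∈ L, (m.totient : ℝ)⁻¹ * S⁻¹ := by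
      refine (Finset.abs_sum_le_sum_abs _ _).trans (Finset.sum_le_sum fun m hm => ?_)
      have hnn : 0 ≤ (m.totient : ℝ)⁻¹ * S⁻¹ := by positivity
      split_ifs
      · rw [abs_mul, abs_mul, abs_of_nonneg hnn, ← mul_assoc]
        exact mul_le_of_le_one_left hnn (mul_le_one₀ (hmu_le _) (abs_nonneg _) (hmu_le _))
      · simpa using hnn
    rw [← Finset.sum_mul, mul_inv_cancel₀ hS0.ne'] at hsum
    simp only [w]
    rw [abs_mul, Nat.abs_cast]
    exact mul_le_of_le_one_right (Nat.cast_nonneg k) hsum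
  · have hlcm : ∀ a ∈ L, ∀ b ∈ L, ((a.lcm b : ℕ) : ℝ)⁻¹ =
        ∑ l ∈ L, (l.totient : ℝ) *
          ((if l ∣ a then (a : ℝ)⁻¹ else 0) * (if l ∣ b then (b : ℝ)⁻¹ else 0)) := by
      intro a ha b hb
      have ha0 := hpos a ha
      have hb0 := hpos b hb
      have hg : ((a.gcd b : ℕ) : ℝ) = ∑ l ∈ L with l ∣ a ∧ l ∣ b, (l.totient : ℝ) := by
        rw [← Nat.sum_totient (a.gcd b), Nat.cast_sum]
        refine Finset.sum_congr ?_ fun _ _ => rfl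
        ext l
        simp only [Nat.mem_divisors, Finset.mem_filter, Nat.dvd_gcd_iff]
        exact ⟨fun h => ⟨hL a ha l h.1.1, h.1⟩, fun h => ⟨h.2, (Nat.gcd_pos_of_pos_left b ha0).ne'⟩⟩
      have hgl : ((a.gcd b : ℕ) : ℝ) * (a.lcm b : ℕ) = a * b := by
        exact_mod_cast Nat.gcd_mul_lcm a b
      have hlpos : ((a.lcm b : ℕ) : ℝ) ≠ 0 := by exact_mod_cast (Nat.lcm_pos ha0 hb0).ne'
      have ha' : (a : ℝ) ≠ 0 := by positivity
      have hb' : (b : ℝ) ≠ 0 := by positivity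
      have hinv : ((a.lcm b : ℕ) : ℝ)⁻¹ = (a.gcd b : ℕ) * ((a : ℝ)⁻¹ * (b : ℝ)⁻¹) := by
        field_simp
        linarith
      rw [hinv, hg, Finset.sum_mul, Finset.sum_filter]
      refine Finset.sum_congr rfl fun l _ => ?_
      by_cases h1 : l ∣ a <;> by_cases h2 : l ∣ b <;> simp [h1, h2]
    calc ∑ a ∈ L, ∑ b ∈ L, w a * w b * ((a.lcm b : ℕ) : ℝ)⁻¹
        = ∑ a ∈ L, ∑ b ∈ L, ∑ l ∈ L, (l.totient : ℝ) *
            ((if l ∣ a then w a * (a : ℝ)⁻¹ else 0) *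
              (if l ∣ b then w b * (b : ℝ)⁻¹ else 0)) := by
          refine Finset.sum_congr rfl fun a ha => Finset.sum_congr rfl fun b hb => ?_
          rw [hlcm a ha b hb, Finset.mul_sum]
          refine Finset.sum_congr rfl fun l _ => ?_
          split_ifs <;> ring
      _ = ∑ l ∈ L, (l.totient : ℝ) *
            (∑ k ∈ L, (if l ∣ k then w k * (k : ℝ)⁻¹ else 0)) ^ 2 := by
          rw [Finset.sum_congr rfl fun a _ => Finset.sum_comm, Finset.sum_comm]
          refine Finset.sum_congr rfl fun l _ => ?_
          rw [sq, Finset.sum_mul_sum, Finset.mul_sum]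
          exact Finset.sum_congr rfl fun a _ => by rw [Finset.mul_sum]
      _ = ∑ l ∈ L, (l.totient : ℝ)⁻¹ * (S⁻¹ * S⁻¹) := by
          refine Finset.sum_congr rfl fun l hl => ?_
          have := (hφ l hl).ne'
          rw [hdiag l hl]
          simp only [y]
          rw [mul_pow, hmu l hl]
          field_simp
      _ = S⁻¹ := by rw [← Finset.sum_mul, ← hS, mul_inv_cancel_left₀ hS0.ne']

/-- Selberg's upper bound sieve. -/
theorem card_sifted_le {L : Finset ℕ} (hpos : ∀ l ∈ L, 0 < l)
    (hsq : ∀ l ∈ L, Squarefree l) (h1 : 1 ∈ L) (hL : ∀ l ∈ L, ∀ k, k ∣ l → k ∈ L)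
    (A : Finset ℕ) {X : ℝ}
    (hA : ∀ a ∈ L, ∀ b ∈ L, |((A.filter (a.lcm b ∣ ·)).card : ℝ) - X / (a.lcm b : ℕ)| ≤ 1) :
    ((A.filter fun m => ∀ k ∈ L, k ∣ m → k = 1).card : ℝ) ≤
      X * (∑ l ∈ L, (l.totient : ℝ)⁻¹)⁻¹ + (∑ l ∈ L, (l : ℝ)) ^ 2 := by
  obtain ⟨w, hw1, hw, hmain⟩ := exists_selberg_weights hpos hsq h1 hL
  have hexpand : ∑ m ∈ A, (∑ k ∈ L, if k ∣ m then w k else 0) ^ 2 =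
      ∑ a ∈ L, ∑ b ∈ L, w a * w b * ((A.filter (a.lcm b ∣ ·)).card : ℝ) := by
    calc ∑ m ∈ A, (∑ k ∈ L, if k ∣ m then w k else 0) ^ 2
        = ∑ m ∈ A, ∑ a ∈ L, ∑ b ∈ L, if a.lcm b ∣ m then w a * w b else 0 := by
          refine Finset.sum_congr rfl fun m _ => ?_
          rw [sq, Finset.sum_mul_sum]
          refine Finset.sum_congr rfl fun a _ => Finset.sum_congr rfl fun b _ => ?_
          by_cases h1 : a ∣ m <;> by_cases h2 : b ∣ m <;> simp [Nat.lcm_dvd_iff, h1, h2]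
      _ = _ := by
          rw [Finset.sum_comm]
          refine Finset.sum_congr rfl fun a _ => ?_
          rw [Finset.sum_comm]
          refine Finset.sum_congr rfl fun b _ => ?_
          rw [← Finset.sum_filter, Finset.sum_const, nsmul_eq_mul, mul_comm]
  calc ((A.filter fun m => ∀ k ∈ L, k ∣ m → k = 1).card : ℝ)
      = ∑ m ∈ A.filter fun m => ∀ k ∈ L, k ∣ m → k = 1, 1 := by simp
    _ = ∑ m ∈ A.filter fun m => ∀ k ∈ L, k ∣ m → k = 1,
          (∑ k ∈ L, if k ∣ m then w k else 0) ^ 2 := by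
        refine Finset.sum_congr rfl fun m hm => ?_
        rw [Finset.sum_eq_single_of_mem 1 h1 fun k hk hk1 =>
          if_neg fun hkm => hk1 ((Finset.mem_filter.1 hm).2 k hk hkm)]
        simp [hw1]
    _ ≤ ∑ m ∈ A, (∑ k ∈ L, if k ∣ m then w k else 0) ^ 2 :=
        Finset.sum_le_sum_of_subset_of_nonneg (Finset.filter_subset _ _)
          fun _ _ _ => sq_nonneg _
    _ ≤ ∑ a ∈ L, ∑ b ∈ L, (X * (w a * w b * ((a.lcm b : ℕ) : ℝ)⁻¹) + (a : ℝ) * b) := by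
        rw [hexpand]
        refine Finset.sum_le_sum fun a ha => Finset.sum_le_sum fun b hb => ?_
        have h := (le_abs_self _).trans_eq (abs_mul (w a * w b)
          (((A.filter (a.lcm b ∣ ·)).card : ℝ) - X / (a.lcm b : ℕ)))
        have hab : |w a * w b| ≤ (a : ℝ) * b := by
          rw [abs_mul]
          exact mul_le_mul (hw a) (hw b) (abs_nonneg _) (Nat.cast_nonneg a)
        have h' := h.trans (mul_le_mul hab (hA a ha b hb) (abs_nonneg _) (by positivity))
        rw [mul_sub, div_eq_mul_inv] at h'
        linarith
    _ = _ := by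
        simp_rw [Finset.sum_add_distrib, ← Finset.mul_sum]
        rw [hmain, sq, Finset.sum_mul_sum]
        simp_rw [Finset.mul_sum]

theorem sum_Icc_inv_pos {z : ℕ} (hz : 1 ≤ z) : 0 < ∑ k ∈ Finset.Icc 1 z, (k : ℝ)⁻¹ :=
  Finset.sum_pos (fun k hk => inv_pos.2 (by exact_mod_cast (Finset.mem_Icc.1 hk).1))
    ⟨1, Finset.mem_Icc.2 ⟨le_rfl, hz⟩⟩

/-- A Brun–Titchmarsh type bound for the primes in a residue class modulo `d`. -/
theorem card_primes_modEq_le (n a : ℕ) {d z : ℕ} (hd : 0 < d) (hz : 1 ≤ z) :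
    ((((Finset.range n).filter Nat.Prime).filter (· ≡ a [MOD d])).card : ℝ) ≤
      n * (d.totient : ℝ)⁻¹ * (∑ k ∈ Finset.Icc 1 z, (k : ℝ)⁻¹)⁻¹ + 2 * (z : ℝ) ^ 4 := by
  set L := squarefreeCoprime d z
  set A := (Finset.range n).filter (· ≡ a [MOD d])
  have hpos : ∀ l ∈ L, 0 < l := fun l hl => (mem_squarefreeCoprime.1 hl).1.1
  have h1 : 1 ∈ L := mem_squarefreeCoprime.2 ⟨⟨le_rfl, hz⟩, squarefree_one, Nat.coprime_one_left d⟩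
  have hL : ∀ l ∈ L, ∀ k, k ∣ l → k ∈ L := by
    intro l hl k hk
    obtain ⟨⟨hl1, hlz⟩, hsq, hcop⟩ := mem_squarefreeCoprime.1 hl
    exact mem_squarefreeCoprime.2 ⟨⟨Nat.pos_of_dvd_of_pos hk hl1, (Nat.le_of_dvd hl1 hk).trans hlz⟩,
      hsq.squarefree_of_dvd hk, hcop.coprime_dvd_left hk⟩
  have hsieve := card_sifted_le hpos (fun l hl => (mem_squarefreeCoprime.1 hl).2.1) h1 hL A
    (X := (n : ℝ) / d) fun b hb c hc => by
      refine abs_card_filter_modEq_dvd_sub_le n a hd (Nat.lcm_pos (hpos b hb) (hpos c hc)) ?_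
      exact ((mem_squarefreeCoprime.1 hb).2.2.mul_left
        (mem_squarefreeCoprime.1 hc).2.2).coprime_dvd_left (Nat.lcm_dvd_mul b c) |>.symm
  have hsub : ((Finset.range n).filter Nat.Prime).filter (· ≡ a [MOD d]) ⊆
      Finset.Icc 1 z ∪ A.filter fun m => ∀ k ∈ L, k ∣ m → k = 1 := by
    intro p hp
    obtain ⟨hp, hmod⟩ := Finset.mem_filter.1 hp
    obtain ⟨hpn, hp⟩ := Finset.mem_filter.1 hp
    by_cases hpz : p ≤ z
    · exact Finset.mem_union_left _ (Finset.mem_Icc.2 ⟨hp.one_le, hpz⟩)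
    · refine Finset.mem_union_right _ (Finset.mem_filter.2
        ⟨Finset.mem_filter.2 ⟨hpn, hmod⟩, fun k hk hkp => ?_⟩)
      have hkz := (mem_squarefreeCoprime.1 hk).1.2
      exact ((Nat.dvd_prime hp).1 hkp).resolve_right (by omega)
  have hcard : ((((Finset.range n).filter Nat.Prime).filter (· ≡ a [MOD d])).card : ℝ) ≤
      z + (A.filter fun m => ∀ k ∈ L, k ∣ m → k = 1).card := by
    have h := (Finset.card_le_card hsub).trans (Finset.card_union_le _ _)
    rw [Nat.card_Icc, Nat.add_sub_cancel] at h
    exact_mod_cast h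
  have hH := sum_Icc_inv_pos hz
  have hHS := sum_Icc_inv_le_mul_sum_inv_totient hd z
  have hφ : (0 : ℝ) < d.totient := by exact_mod_cast Nat.totient_pos.2 hd
  have hd' : (0 : ℝ) < d := by exact_mod_cast hd
  have hS : (∑ l ∈ L, (l.totient : ℝ)⁻¹)⁻¹ ≤
      d * (d.totient : ℝ)⁻¹ * (∑ k ∈ Finset.Icc 1 z, (k : ℝ)⁻¹)⁻¹ := by
    have hS0 : 0 < ∑ l ∈ L, (l.totient : ℝ)⁻¹ :=
      pos_of_mul_pos_right (hH.trans_le hHS) (by positivity)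
    rw [inv_le_iff_one_le_mul₀ hS0, mul_right_comm, ← div_eq_mul_inv, one_le_div₀ hH]
    exact hHS
  have hmain : (n : ℝ) / d * (∑ l ∈ L, (l.totient : ℝ)⁻¹)⁻¹ ≤
      n * (d.totient : ℝ)⁻¹ * (∑ k ∈ Finset.Icc 1 z, (k : ℝ)⁻¹)⁻¹ := by
    refine (mul_le_mul_of_nonneg_left hS (by positivity)).trans_eq ?_
    field_simp
  have hsum : ∑ l ∈ L, (l : ℝ) ≤ (z : ℝ) ^ 2 := by
    have hLz : L.card ≤ z := by
      have h := Finset.card_le_card (Finset.filter_subset _ _ : L ⊆ Finset.Icc 1 z)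
      rwa [Nat.card_Icc, Nat.add_sub_cancel] at h
    calc ∑ l ∈ L, (l : ℝ) ≤ L.card • (z : ℝ) := Finset.sum_le_card_nsmul _ _ _ fun l hl => by
          exact_mod_cast (mem_squarefreeCoprime.1 hl).1.2
      _ ≤ (z : ℝ) ^ 2 := by
          rw [nsmul_eq_mul, sq]
          gcongr
  have hsum2 : (∑ l ∈ L, (l : ℝ)) ^ 2 ≤ (z : ℝ) ^ 4 := by
    calc (∑ l ∈ L, (l : ℝ)) ^ 2 ≤ ((z : ℝ) ^ 2) ^ 2 := by gcongr
      _ = (z : ℝ) ^ 4 := by ring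
  have hz4 : (z : ℝ) ≤ (z : ℝ) ^ 4 := le_self_pow₀ (by exact_mod_cast hz) (by norm_num)
  linarith

theorem card_divisors_le_two_mul {m N : ℕ} (hm : 0 < m) (hN : m < (N + 1) ^ 2) :
    m.divisors.card ≤ 2 * ((Finset.Icc 1 N).filter (· ∣ m)).card := by
  set D := (Finset.Icc 1 N).filter (· ∣ m)
  have hsub : m.divisors ⊆ D ∪ D.image (m / ·) := by
    intro e he
    have hem := Nat.dvd_of_mem_divisors he
    obtain ⟨f, rfl⟩ := hem
    have he0 : 0 < e := Nat.pos_of_mul_pos_right hm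
    have hf0 : 0 < f := Nat.pos_of_mul_pos_left hm
    by_cases heN : e ≤ N
    · exact Finset.mem_union_left _ (Finset.mem_filter.2
        ⟨Finset.mem_Icc.2 ⟨he0, heN⟩, dvd_mul_right e f⟩)
    · have hfN : f ≤ N := by
        by_contra h
        have : (N + 1) * (N + 1) ≤ e * f := Nat.mul_le_mul (by omega) (by omega)
        rw [sq] at hN
        omega
      exact Finset.mem_union_right _ (Finset.mem_image.2 ⟨f, Finset.mem_filter.2
        ⟨Finset.mem_Icc.2 ⟨hf0, hfN⟩, dvd_mul_left f e⟩, Nat.mul_div_cancel e hf0⟩)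
  calc m.divisors.card ≤ D.card + (D.image (m / ·)).card :=
        (Finset.card_le_card hsub).trans (Finset.card_union_le _ _)
    _ ≤ 2 * D.card := by
        have := Finset.card_image_le (s := D) (f := (m / ·))
        omega

theorem sum_Icc_inv_le_five_mul {N z : ℕ} (hz : 1 ≤ z) (hN : 1 ≤ N) (hNz : N ≤ (z + 1) ^ 4) :
    ∑ m ∈ Finset.Icc 1 N, (m : ℝ)⁻¹ ≤ 5 * ∑ k ∈ Finset.Icc 1 z, (k : ℝ)⁻¹ := by
  have hharm : ∀ M : ℕ, ((harmonic M : ℚ) : ℝ) = ∑ m ∈ Finset.Icc 1 M, (m : ℝ)⁻¹ := fun M => by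
    rw [harmonic_eq_sum_Icc]
    push_cast
    rfl
  have hupper := harmonic_le_one_add_log N
  have hlower := log_add_one_le_harmonic z
  rw [hharm] at hupper hlower
  have hlog : Real.log N ≤ 4 * Real.log ((z + 1 : ℕ) : ℝ) := by
    rw [show (4 : ℝ) = ((4 : ℕ) : ℝ) by norm_num, ← Real.log_pow]
    exact Real.log_le_log (by exact_mod_cast hN) (by exact_mod_cast hNz)
  have hone : (1 : ℝ) ≤ ∑ k ∈ Finset.Icc 1 z, (k : ℝ)⁻¹ := by
    have h := Finset.single_le_sum (f := fun k : ℕ => (k : ℝ)⁻¹) (fun k _ => by positivity)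
      (Finset.mem_Icc.2 ⟨le_rfl, hz⟩)
    simpa using h
  linarith

/-- There is an absolute constant `C > 0` such that for every `n ≥ 2`,
`∑_{p prime, p < n} τ(n - p) ≤ C·n`, where `τ` is the number-of-divisors function. -/
theorem sum_divisors_shifted_primes_le :
    ∃ C : ℝ, 0 < C ∧ ∀ n : ℕ, 2 ≤ n →
      ((∑ p ∈ (Finset.range n).filter Nat.Prime, (n - p).divisors.card : ℕ) : ℝ) ≤ C * n := by
  refine ⟨44, by norm_num, fun n hn => ?_⟩
  set N := n.sqrt
  set z := N.sqrt.sqrt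
  have hN : 1 ≤ N := Nat.sqrt_pos.2 (by omega)
  have hz : 1 ≤ z := Nat.sqrt_pos.2 (Nat.sqrt_pos.2 hN)
  have hz4 : z ^ 4 ≤ N := by
    calc z ^ 4 = (z ^ 2) ^ 2 := by ring
      _ ≤ N.sqrt ^ 2 := Nat.pow_le_pow_left (Nat.sqrt_le' _) 2
      _ ≤ N := Nat.sqrt_le' _
  have hNz : N ≤ (z + 1) ^ 4 := by
    calc N ≤ (N.sqrt + 1) ^ 2 := (Nat.lt_succ_sqrt' N).le
      _ ≤ ((z + 1) ^ 2) ^ 2 := Nat.pow_le_pow_left (Nat.lt_succ_sqrt' N.sqrt) 2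
      _ = (z + 1) ^ 4 := by ring
  have hNn : (N : ℝ) * N ≤ n := by exact_mod_cast Nat.sqrt_le n
  have hz4' : (z : ℝ) ^ 4 ≤ N := by exact_mod_cast hz4
  set P := (Finset.range n).filter Nat.Prime
  set H := ∑ k ∈ Finset.Icc 1 z, (k : ℝ)⁻¹
  have hH : 0 < H := sum_Icc_inv_pos hz
  have hnat : ∑ p ∈ P, (n - p).divisors.card ≤
      2 * ∑ d ∈ Finset.Icc 1 N, (P.filter (· ≡ n [MOD d])).card := by
    calc ∑ p ∈ P, (n - p).divisors.card
        ≤ ∑ p ∈ P, 2 * ((Finset.Icc 1 N).filter (· ∣ n - p)).card := by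
          refine Finset.sum_le_sum fun p hp => ?_
          have hpn := Finset.mem_range.1 (Finset.mem_filter.1 hp).1
          exact card_divisors_le_two_mul (by omega)
            ((Nat.sub_le n p).trans_lt (Nat.lt_succ_sqrt' n))
      _ = 2 * ∑ d ∈ Finset.Icc 1 N, (P.filter (d ∣ n - ·)).card := by
          rw [← Finset.mul_sum]
          congr 1
          exact Finset.sum_card_bipartiteAbove_eq_sum_card_bipartiteBelow fun p d => d ∣ n - p
      _ = _ := by
          congr 1
          refine Finset.sum_congr rfl fun d _ => congrArg Finset.card ?_
          refine Finset.filter_congr fun p hp => ?_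
          have hpn := Finset.mem_range.1 (Finset.mem_filter.1 hp).1
          exact (Nat.modEq_iff_dvd' hpn.le).symm
  calc ((∑ p ∈ P, (n - p).divisors.card : ℕ) : ℝ)
      ≤ 2 * ∑ d ∈ Finset.Icc 1 N, ((P.filter (· ≡ n [MOD d])).card : ℝ) := by
        exact_mod_cast hnat
    _ ≤ 2 * ∑ d ∈ Finset.Icc 1 N, (n * (d.totient : ℝ)⁻¹ * H⁻¹ + 2 * (N : ℝ)) := by
        gcongr with d hd
        refine (card_primes_modEq_le n n (Finset.mem_Icc.1 hd).1 hz).trans ?_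
        gcongr
    _ = 2 * (n * (∑ d ∈ Finset.Icc 1 N, (d.totient : ℝ)⁻¹) * H⁻¹ + 2 * ((N : ℝ) * N)) := by
        rw [Finset.sum_add_distrib, ← Finset.sum_mul, ← Finset.mul_sum, Finset.sum_const,
          Nat.card_Icc, Nat.add_sub_cancel, nsmul_eq_mul]
        ring
    _ ≤ 2 * (n * (4 * (5 * H)) * H⁻¹ + 2 * (n : ℝ)) := by
        gcongr
        exact (sum_inv_totient_le N).trans
          (mul_le_mul_of_nonneg_left (sum_Icc_inv_le_five_mul hz hN hNz) (by norm_num))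
    _ = 44 * n := by
        field_simp
        norm_num
end

section
/- For every ε ∈ (0, 1/4) there exist a constant C > 0 and a threshold n₀ such that for every integer n ≥ n₀, setting M = n^{1−2ε}, one has ∑_{i prime, M ≤ i ≤ n − n^{1−ε}} C(n−i)²/i ≤ C. -/
open Real

open scoped Classical

/-- The singular series `C(n) = ∏_{p ∤ n} (1 - 1/(p-1)²) · ∏_{p ∣ n} (1 + 1/(p-1))`,
where both products run over primes. -/
noncomputable def singularSeries (n : ℕ) : ℝ :=
  (∏' p : {p : ℕ // p.Prime ∧ ¬ p ∣ n}, (1 - 1 / ((p : ℕ) - 1 : ℝ) ^ 2)) *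
    ∏ p ∈ n.primeFactors, (1 + 1 / ((p : ℝ) - 1))

open ArithmeticFunction in
theorem sum_moebius_div_filter_dvd {e q : ℕ} (hq : q ≠ 0) (heq : e ∣ q) :
    ∑ d ∈ q.divisors with e ∣ d, (moebius (q / d) : ℝ) = if q = e then 1 else 0 := by
  obtain ⟨r, rfl⟩ := heq
  have he : e ≠ 0 := left_ne_zero_of_mul hq
  have hr : r ≠ 0 := right_ne_zero_of_mul hq
  have h1 : ∑ d ∈ (e * r).divisors with e ∣ d, (moebius (e * r / d) : ℝ)
      = ∑ c ∈ r.divisors, (moebius (r / c) : ℝ) := by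
    symm
    refine Finset.sum_nbij' (fun c => e * c) (fun d => d / e) ?_ ?_ ?_ ?_ ?_
    · intro c hc
      simp only [Finset.mem_filter, Nat.mem_divisors] at hc ⊢
      exact ⟨⟨mul_dvd_mul_left e hc.1, hq⟩, dvd_mul_right _ _⟩
    · intro d hd
      simp only [Finset.mem_filter, Nat.mem_divisors] at hd ⊢
      obtain ⟨⟨h, -⟩, c, rfl⟩ := hd
      rw [Nat.mul_div_cancel_left _ (Nat.pos_of_ne_zero he)]
      exact ⟨Nat.dvd_of_mul_dvd_mul_left (Nat.pos_of_ne_zero he) h, hr⟩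
    · intro c _
      exact Nat.mul_div_cancel_left _ (Nat.pos_of_ne_zero he)
    · intro d hd
      exact Nat.mul_div_cancel' (Finset.mem_filter.1 hd).2
    · intro c _
      rw [Nat.mul_div_mul_left _ _ (Nat.pos_of_ne_zero he)]
  rw [h1, Nat.sum_div_divisors r (fun c => (moebius c : ℝ))]
  have h2 : (∑ c ∈ r.divisors, moebius c : ℤ) = if r = 1 then 1 else 0 := by
    have := congrArg (fun f : ArithmeticFunction ℤ => f r) moebius_mul_coe_zeta
    simp only [coe_mul_zeta_apply, one_apply] at this
    exact this
  have h3 : (e * r = e) ↔ r = 1 := by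
    constructor
    · intro h
      exact Nat.eq_of_mul_eq_mul_left (Nat.pos_of_ne_zero he) (by rw [h, mul_one])
    · rintro rfl; exact mul_one e
  rw [← Int.cast_sum, h2]
  simp [h3]

/-- The squarefree moduli up to `Q` that are coprime to `k`. -/
def sieveModuli (k Q : ℕ) : Finset ℕ :=
  (Finset.Icc 1 Q).filter fun q => Squarefree q ∧ q.Coprime k

theorem mem_sieveModuli {k Q q : ℕ} :
    q ∈ sieveModuli k Q ↔ (1 ≤ q ∧ q ≤ Q) ∧ Squarefree q ∧ q.Coprime k := by
  simp [sieveModuli]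

theorem sieveModuli_of_dvd {k Q q d : ℕ} (hq : q ∈ sieveModuli k Q) (hd : d ∣ q) :
    d ∈ sieveModuli k Q := by
  rw [mem_sieveModuli] at hq ⊢
  obtain ⟨⟨h1, h2⟩, h3, h4⟩ := hq
  exact ⟨⟨Nat.pos_of_dvd_of_pos hd h1, (Nat.le_of_dvd h1 hd).trans h2⟩,
    h3.squarefree_of_dvd hd, h4.coprime_dvd_left hd⟩

/-- The normalising sum of Selberg's sieve. -/
noncomputable def selbergSum (k Q : ℕ) : ℝ :=
  ∑ q ∈ sieveModuli k Q, 1 / (q.totient : ℝ)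

/-- Selberg's weights, scaled so that the weight at `1` is `selbergSum k Q`. -/
noncomputable def selbergCoeff (k Q d : ℕ) : ℝ :=
  d * ∑ q ∈ sieveModuli k Q with d ∣ q,
    (ArithmeticFunction.moebius q : ℝ) * ArithmeticFunction.moebius (q / d) / q.totient

theorem selbergCoeff_one (k Q : ℕ) : selbergCoeff k Q 1 = selbergSum k Q := by
  unfold selbergCoeff selbergSum
  simp only [isUnit_one, IsUnit.dvd, Finset.filter_true, Nat.cast_one, one_mul, Nat.div_one]
  refine Finset.sum_congr rfl fun q hq => ?_
  have h := ArithmeticFunction.moebius_sq_eq_one_of_squarefree (mem_sieveModuli.1 hq).2.1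
  have h' : (ArithmeticFunction.moebius q : ℝ) ^ 2 = 1 := by exact_mod_cast h
  rw [← sq, h']

theorem sum_selbergCoeff_div {k Q e : ℕ} (he : e ∈ sieveModuli k Q) :
    ∑ d ∈ sieveModuli k Q with e ∣ d, selbergCoeff k Q d / d =
      (ArithmeticFunction.moebius e : ℝ) / e.totient := by
  have h1 : ∑ d ∈ sieveModuli k Q with e ∣ d, selbergCoeff k Q d / d =
      ∑ d ∈ sieveModuli k Q, ∑ q ∈ sieveModuli k Q, if e ∣ d ∧ d ∣ q then
        (ArithmeticFunction.moebius q : ℝ) * ArithmeticFunction.moebius (q / d) / q.totient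
        else 0 := by
    rw [Finset.sum_filter]
    refine Finset.sum_congr rfl fun d hd => ?_
    have hd0 : (d : ℝ) ≠ 0 := by
      have := (mem_sieveModuli.1 hd).1.1
      positivity
    by_cases hed : e ∣ d
    · simp only [hed, if_true, true_and, selbergCoeff]
      rw [mul_div_cancel_left₀ _ hd0, Finset.sum_filter]
    · simp [hed]
  rw [h1, Finset.sum_comm]
  have h2 : ∀ q ∈ sieveModuli k Q, (∑ d ∈ sieveModuli k Q, if e ∣ d ∧ d ∣ q then
        (ArithmeticFunction.moebius q : ℝ) * ArithmeticFunction.moebius (q / d) / q.totient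
        else 0) = if q = e then (ArithmeticFunction.moebius e : ℝ) / e.totient else 0 := by
    intro q hq
    have hq0 : q ≠ 0 := by have := (mem_sieveModuli.1 hq).1.1; omega
    by_cases heq : e ∣ q
    · rw [← Finset.sum_filter]
      have h3 : (sieveModuli k Q).filter (fun d => e ∣ d ∧ d ∣ q) =
          q.divisors.filter (fun d => e ∣ d) := by
        ext d
        simp only [Finset.mem_filter, Nat.mem_divisors]
        constructor
        · rintro ⟨-, a, b⟩; exact ⟨⟨b, hq0⟩, a⟩
        · rintro ⟨⟨b, -⟩, a⟩; exact ⟨sieveModuli_of_dvd hq b, a, b⟩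
      rw [h3]
      have h4 : ∀ d ∈ q.divisors.filter (fun d => e ∣ d),
          (ArithmeticFunction.moebius q : ℝ) * ArithmeticFunction.moebius (q / d) / q.totient =
          (ArithmeticFunction.moebius q : ℝ) / q.totient * ArithmeticFunction.moebius (q / d) :=
        fun d _ => by ring
      rw [Finset.sum_congr rfl h4, ← Finset.mul_sum, sum_moebius_div_filter_dvd hq0 heq]
      by_cases h : q = e
      · simp [h]
      · simp [h]
    · have hne : q ≠ e := fun h => heq (h ▸ dvd_rfl)
      rw [if_neg hne]
      refine Finset.sum_eq_zero fun d _ => if_neg ?_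
      rintro ⟨a, b⟩
      exact heq (a.trans b)
  rw [Finset.sum_congr rfl h2, Finset.sum_ite_eq', if_pos he]

theorem sum_selbergCoeff_div_lcm (k Q : ℕ) :
    ∑ d₁ ∈ sieveModuli k Q, ∑ d₂ ∈ sieveModuli k Q,
      selbergCoeff k Q d₁ * selbergCoeff k Q d₂ / (d₁.lcm d₂ : ℕ) = selbergSum k Q := by
  have h1 : ∀ d₁ ∈ sieveModuli k Q, ∀ d₂ ∈ sieveModuli k Q,
      selbergCoeff k Q d₁ * selbergCoeff k Q d₂ / (d₁.lcm d₂ : ℕ) =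
      ∑ e ∈ sieveModuli k Q, (e.totient : ℝ) *
        ((if e ∣ d₁ then selbergCoeff k Q d₁ / d₁ else 0) *
          (if e ∣ d₂ then selbergCoeff k Q d₂ / d₂ else 0)) := by
    intro d₁ h₁ d₂ h₂
    have p₁ : 0 < d₁ := (mem_sieveModuli.1 h₁).1.1
    have p₂ : 0 < d₂ := (mem_sieveModuli.1 h₂).1.1
    have pl : 0 < d₁.lcm d₂ := Nat.lcm_pos p₁ p₂
    have hg : ((d₁.gcd d₂ : ℕ) : ℝ) = ∑ e ∈ (d₁.gcd d₂).divisors, (e.totient : ℝ) := by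
      rw [← Nat.cast_sum, Nat.sum_totient]
    have hf : (d₁.gcd d₂).divisors = (sieveModuli k Q).filter (fun e => e ∣ d₁ ∧ e ∣ d₂) := by
      ext e
      simp only [Finset.mem_filter, Nat.mem_divisors, Nat.dvd_gcd_iff]
      constructor
      · rintro ⟨⟨a, b⟩, -⟩; exact ⟨sieveModuli_of_dvd h₁ a, a, b⟩
      · rintro ⟨-, a, b⟩; exact ⟨⟨a, b⟩, (Nat.gcd_pos_of_pos_left _ p₁).ne'⟩
    have hl : ((d₁.gcd d₂ : ℕ) : ℝ) * (d₁.lcm d₂ : ℕ) = d₁ * d₂ := by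
      exact_mod_cast Nat.gcd_mul_lcm d₁ d₂
    have h2 : selbergCoeff k Q d₁ * selbergCoeff k Q d₂ / (d₁.lcm d₂ : ℕ) =
        ((d₁.gcd d₂ : ℕ) : ℝ) * (selbergCoeff k Q d₁ / d₁ * (selbergCoeff k Q d₂ / d₂)) := by
      have p₁' : (d₁ : ℝ) ≠ 0 := by positivity
      have p₂' : (d₂ : ℝ) ≠ 0 := by positivity
      have pl' : ((d₁.lcm d₂ : ℕ) : ℝ) ≠ 0 := by positivity
      field_simp
      linear_combination (-(selbergCoeff k Q d₁ * selbergCoeff k Q d₂)) * hl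
    rw [h2, hg, hf, Finset.sum_filter, Finset.sum_mul]
    refine Finset.sum_congr rfl fun e _ => ?_
    by_cases a : e ∣ d₁ <;> by_cases b : e ∣ d₂ <;> simp [a, b]
  rw [Finset.sum_congr rfl fun d₁ h₁ => Finset.sum_congr rfl fun d₂ h₂ => h1 d₁ h₁ d₂ h₂]
  rw [Finset.sum_congr rfl fun d₁ _ => Finset.sum_comm, Finset.sum_comm]
  unfold selbergSum
  refine Finset.sum_congr rfl fun e he => ?_
  have h3 : ∑ d₁ ∈ sieveModuli k Q, ∑ d₂ ∈ sieveModuli k Q, (e.totient : ℝ) *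
        ((if e ∣ d₁ then selbergCoeff k Q d₁ / d₁ else 0) *
          (if e ∣ d₂ then selbergCoeff k Q d₂ / d₂ else 0)) =
      e.totient * ((∑ d ∈ sieveModuli k Q with e ∣ d, selbergCoeff k Q d / d) *
        ∑ d ∈ sieveModuli k Q with e ∣ d, selbergCoeff k Q d / d) := by
    rw [Finset.sum_filter, Finset.sum_mul_sum, Finset.mul_sum]
    refine Finset.sum_congr rfl fun d₁ _ => ?_
    rw [Finset.mul_sum]
  have h := ArithmeticFunction.moebius_sq_eq_one_of_squarefree (mem_sieveModuli.1 he).2.1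
  have h' : (ArithmeticFunction.moebius e : ℝ) ^ 2 = 1 := by exact_mod_cast h
  have ht : (e.totient : ℝ) ≠ 0 := by
    have := Nat.totient_pos.2 (mem_sieveModuli.1 he).1.1
    positivity
  rw [h3, sum_selbergCoeff_div he]
  field_simp
  exact h'

theorem abs_selbergCoeff_le {k Q d : ℕ} (hd : d ∈ sieveModuli k Q) :
    |selbergCoeff k Q d| ≤ (Q : ℝ) ^ 2 := by
  unfold selbergCoeff
  rw [abs_mul, Nat.abs_cast, sq]
  have hdQ : (d : ℝ) ≤ Q := by exact_mod_cast (mem_sieveModuli.1 hd).1.2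
  refine mul_le_mul hdQ ?_ (abs_nonneg _) (Nat.cast_nonneg _)
  refine (Finset.abs_sum_le_sum_abs _ _).trans ?_
  have h1 : ∀ q ∈ (sieveModuli k Q).filter (fun q => d ∣ q),
      |(ArithmeticFunction.moebius q : ℝ) * ArithmeticFunction.moebius (q / d) / q.totient| ≤ 1 := by
    intro q hq
    have hm : ∀ n, |(ArithmeticFunction.moebius n : ℝ)| ≤ 1 := fun n => by
      exact_mod_cast ArithmeticFunction.abs_moebius_le_one (n := n)
    have ht : (1 : ℝ) ≤ q.totient := by
      exact_mod_cast Nat.totient_pos.2 (mem_sieveModuli.1 (Finset.mem_filter.1 hq).1).1.1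
    rw [abs_div, abs_mul, Nat.abs_cast]
    rw [div_le_one (by positivity)]
    exact (mul_le_one₀ (hm q) (abs_nonneg _) (hm _)).trans ht
  refine (Finset.sum_le_card_nsmul _ _ 1 h1).trans ?_
  rw [nsmul_eq_mul, mul_one]
  have h2 : ((sieveModuli k Q).filter (fun q => d ∣ q)).card ≤ Q := by
    refine (Finset.card_filter_le _ _).trans ((Finset.card_filter_le _ _).trans ?_)
    simp
  exact_mod_cast h2

/-- Selberg's upper bound sieve with a crude error term. -/
theorem card_mul_selbergSum_sq_le {k Q : ℕ} (hQ : 1 ≤ Q) (A B : Finset ℕ) (hBA : B ⊆ A)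
    (hB : ∀ i ∈ B, ∀ q ∈ sieveModuli k Q, i.Coprime q) (N : ℝ)
    (hA : ∀ d₁ ∈ sieveModuli k Q, ∀ d₂ ∈ sieveModuli k Q,
      |((A.filter fun i => d₁ ∣ i ∧ d₂ ∣ i).card : ℝ) - N / (d₁.lcm d₂ : ℕ)| ≤ 1) :
    (B.card : ℝ) * selbergSum k Q ^ 2 ≤ N * selbergSum k Q + (Q : ℝ) ^ 6 := by
  set D := sieveModuli k Q with hD
  set b := selbergCoeff k Q with hb
  have hone : 1 ∈ D := mem_sieveModuli.2 ⟨⟨le_rfl, hQ⟩, squarefree_one, Nat.coprime_one_left k⟩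
  have h1 : (B.card : ℝ) * selbergSum k Q ^ 2 ≤
      ∑ i ∈ A, (∑ d ∈ D, if d ∣ i then b d else 0) ^ 2 := by
    rw [← nsmul_eq_mul]
    refine (Finset.card_nsmul_le_sum B _ _ fun i hi => ?_).trans
      (Finset.sum_le_sum_of_subset_of_nonneg hBA fun i _ _ => sq_nonneg _)
    rw [Finset.sum_eq_single_of_mem 1 hone]
    · simp [hb, selbergCoeff_one]
    · intro d hd hd1
      refine if_neg fun hdi => hd1 ?_
      exact Nat.eq_one_of_dvd_coprimes (hB i hi d hd) hdi dvd_rfl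
  have h2 : ∑ i ∈ A, (∑ d ∈ D, if d ∣ i then b d else 0) ^ 2 =
      ∑ d₁ ∈ D, ∑ d₂ ∈ D, b d₁ * b d₂ * ((A.filter fun i => d₁ ∣ i ∧ d₂ ∣ i).card : ℝ) := by
    simp_rw [sq, Finset.sum_mul_sum]
    rw [Finset.sum_comm]
    refine Finset.sum_congr rfl fun d₁ _ => ?_
    rw [Finset.sum_comm]
    refine Finset.sum_congr rfl fun d₂ _ => ?_
    rw [Finset.card_filter, Nat.cast_sum, Finset.mul_sum]
    refine Finset.sum_congr rfl fun i _ => ?_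
    by_cases a : d₁ ∣ i <;> by_cases b : d₂ ∣ i <;> simp [a, b]
  have h3 : ∑ d₁ ∈ D, ∑ d₂ ∈ D, b d₁ * b d₂ * ((A.filter fun i => d₁ ∣ i ∧ d₂ ∣ i).card : ℝ) ≤
      ∑ d₁ ∈ D, ∑ d₂ ∈ D, (N * (b d₁ * b d₂ / (d₁.lcm d₂ : ℕ)) + |b d₁| * |b d₂|) := by
    refine Finset.sum_le_sum fun d₁ h₁ => Finset.sum_le_sum fun d₂ h₂ => ?_
    set c := ((A.filter fun i => d₁ ∣ i ∧ d₂ ∣ i).card : ℝ)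
    have e1 : b d₁ * b d₂ * (c - N / (d₁.lcm d₂ : ℕ)) ≤ |b d₁| * |b d₂| := by
      refine (le_abs_self _).trans ?_
      rw [abs_mul, abs_mul]
      exact mul_le_of_le_one_right (by positivity) (hA d₁ h₁ d₂ h₂)
    have e2 : b d₁ * b d₂ * c = N * (b d₁ * b d₂ / (d₁.lcm d₂ : ℕ)) +
        b d₁ * b d₂ * (c - N / (d₁.lcm d₂ : ℕ)) := by ring
    rw [e2]
    linarith
  have h4 : ∑ d ∈ D, |b d| ≤ (Q : ℝ) ^ 3 := by
    refine (Finset.sum_le_card_nsmul _ _ _ fun d hd => abs_selbergCoeff_le hd).trans ?_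
    rw [nsmul_eq_mul]
    have : (D.card : ℝ) ≤ Q := by
      have : D.card ≤ Q := (Finset.card_filter_le _ _).trans (by simp)
      exact_mod_cast this
    calc (D.card : ℝ) * (Q : ℝ) ^ 2 ≤ Q * (Q : ℝ) ^ 2 := by gcongr
      _ = (Q : ℝ) ^ 3 := by ring
  have h5 : ∑ d₁ ∈ D, ∑ d₂ ∈ D, (N * (b d₁ * b d₂ / (d₁.lcm d₂ : ℕ)) + |b d₁| * |b d₂|) =
      N * selbergSum k Q + (∑ d ∈ D, |b d|) ^ 2 := by
    simp_rw [Finset.sum_add_distrib, ← Finset.mul_sum]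
    rw [sum_selbergCoeff_div_lcm, ← Finset.sum_mul, ← sq]
  have h6 : (∑ d ∈ D, |b d|) ^ 2 ≤ (Q : ℝ) ^ 6 := by
    calc (∑ d ∈ D, |b d|) ^ 2 ≤ ((Q : ℝ) ^ 3) ^ 2 :=
          pow_le_pow_left₀ (Finset.sum_nonneg fun _ _ => abs_nonneg _) h4 2
      _ = (Q : ℝ) ^ 6 := by ring
  linarith

theorem one_le_selbergSum {k Q : ℕ} (hQ : 1 ≤ Q) : 1 ≤ selbergSum k Q := by
  have hone : 1 ∈ sieveModuli k Q :=
    mem_sieveModuli.2 ⟨⟨le_rfl, hQ⟩, squarefree_one, Nat.coprime_one_left k⟩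
  have := Finset.single_le_sum (f := fun q : ℕ => 1 / (q.totient : ℝ))
    (fun q _ => by positivity) hone
  simpa [selbergSum] using this

theorem exists_sq_mul_dvd_mul_sieveModuli {k Q n : ℕ} (hk : k ≠ 0) (hn : n ∈ Finset.Icc 1 Q) :
    ∃ t ∈ Finset.Icc 1 Q ×ˢ (k.divisors ×ˢ sieveModuli k Q), t.1 ^ 2 * (t.2.1 * t.2.2) = n := by
  obtain ⟨hn1, hnQ⟩ := Finset.mem_Icc.1 hn
  obtain ⟨a, b, rfl, ha⟩ := Nat.sq_mul_squarefree n
  have ha0 : 0 < a := Nat.pos_of_ne_zero ha.ne_zero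
  have hb0 : 0 < b := Nat.pos_of_ne_zero (by rintro rfl; simp at hn1)
  have hg0 : 0 < a.gcd k := Nat.gcd_pos_of_pos_left _ ha0
  have hdvd : a.gcd k * (a / a.gcd k) = a := Nat.mul_div_cancel' (Nat.gcd_dvd_left a k)
  have hq0 : 0 < a / a.gcd k := Nat.div_pos (Nat.le_of_dvd ha0 (Nat.gcd_dvd_left a k)) hg0
  have haQ : a ≤ Q := (Nat.le_mul_of_pos_left a (by positivity)).trans hnQ
  refine ⟨(b, a.gcd k, a / a.gcd k), ?_, ?_⟩
  · simp only [Finset.mem_product, Finset.mem_Icc, Nat.mem_divisors, mem_sieveModuli]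
    refine ⟨⟨hb0, ?_⟩, ⟨Nat.gcd_dvd_right a k, hk⟩, ⟨hq0, (Nat.div_le_self _ _).trans haQ⟩, ?_, ?_⟩
    · calc b ≤ b ^ 2 := Nat.le_self_pow two_ne_zero b
        _ ≤ b ^ 2 * a := Nat.le_mul_of_pos_right _ ha0
        _ ≤ Q := hnQ
    · exact ha.squarefree_of_dvd (Nat.div_dvd_of_dvd (Nat.gcd_dvd_left a k))
    · refine Nat.Coprime.symm (Nat.coprime_of_dvd fun p hp hpk hpq => ?_)
      have hpa : p ∣ a := hpq.trans (Nat.div_dvd_of_dvd (Nat.gcd_dvd_left a k))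
      have hpp : p * p ∣ a := by
        rw [← hdvd]
        exact mul_dvd_mul (Nat.dvd_gcd hpa hpk) hpq
      exact hp.not_isUnit (ha p hpp)
  · simp only [hdvd]

theorem log_le_mul_selbergSum {k : ℕ} (Q : ℕ) (hk : k ≠ 0) :
    Real.log (Q + 1 : ℕ) ≤ 2 * (k.divisors.card : ℝ) * selbergSum k Q := by
  have h1 : Real.log (Q + 1 : ℕ) ≤ ∑ n ∈ Finset.Icc 1 Q, 1 / (n : ℝ) := by
    refine (log_add_one_le_harmonic Q).trans (le_of_eq ?_)
    rw [harmonic_eq_sum_Icc]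
    push_cast
    simp
  choose! f hf hfn using fun n (hn : n ∈ Finset.Icc 1 Q) =>
    exists_sq_mul_dvd_mul_sieveModuli hk hn
  set T := Finset.Icc 1 Q ×ˢ (k.divisors ×ˢ sieveModuli k Q)
  have hinj : Set.InjOn f (Finset.Icc 1 Q) := fun a ha b hb hab => by
    rw [← hfn a ha, ← hfn b hb, hab]
  have h2 : ∑ n ∈ Finset.Icc 1 Q, 1 / (n : ℝ) ≤
      ∑ t ∈ T, 1 / ((t.1 : ℝ) ^ 2 * (t.2.1 * t.2.2)) := by
    calc ∑ n ∈ Finset.Icc 1 Q, 1 / (n : ℝ)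
        = ∑ n ∈ Finset.Icc 1 Q, 1 / (((f n).1 : ℝ) ^ 2 * ((f n).2.1 * (f n).2.2)) := by
          refine Finset.sum_congr rfl fun n hn => ?_
          conv_lhs => rw [← hfn n hn]
          push_cast
          rfl
      _ = ∑ t ∈ (Finset.Icc 1 Q).image f, 1 / ((t.1 : ℝ) ^ 2 * (t.2.1 * t.2.2)) := by
          rw [Finset.sum_image hinj]
      _ ≤ _ := by
          refine Finset.sum_le_sum_of_subset_of_nonneg ?_ fun t _ _ => by positivity
          exact Finset.image_subset_iff.2 hf
  have h3 : ∑ t ∈ T, 1 / ((t.1 : ℝ) ^ 2 * (t.2.1 * t.2.2)) =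
      (∑ b ∈ Finset.Icc 1 Q, ((b : ℝ) ^ 2)⁻¹) *
        ((∑ d ∈ k.divisors, 1 / (d : ℝ)) * ∑ q ∈ sieveModuli k Q, 1 / (q : ℝ)) := by
    rw [Finset.sum_mul_sum, ← Finset.sum_product', Finset.sum_mul_sum, ← Finset.sum_product']
    refine Finset.sum_congr rfl fun t _ => ?_
    simp only [one_div, mul_inv]
  have h4 : ∑ b ∈ Finset.Icc 1 Q, ((b : ℝ) ^ 2)⁻¹ ≤ 2 := by
    have := sum_Ioo_inv_sq_le (α := ℝ) 0 (Q + 1)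
    have e : Finset.Ioo 0 (Q + 1) = Finset.Icc 1 Q := by
      ext; simp; omega
    rw [e] at this
    simpa using this
  have h5 : ∑ d ∈ k.divisors, 1 / (d : ℝ) ≤ k.divisors.card := by
    refine (Finset.sum_le_card_nsmul _ _ 1 fun d hd => ?_).trans (by simp)
    have : (1 : ℝ) ≤ d := by exact_mod_cast Nat.pos_of_mem_divisors hd
    rw [div_le_one (by linarith)]
    exact this
  have h6 : ∑ q ∈ sieveModuli k Q, 1 / (q : ℝ) ≤ selbergSum k Q := by
    refine Finset.sum_le_sum fun q hq => ?_
    have := Nat.totient_pos.2 (mem_sieveModuli.1 hq).1.1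
    exact one_div_le_one_div_of_le (by exact_mod_cast this) (by exact_mod_cast Nat.totient_le q)
  calc Real.log (Q + 1 : ℕ) ≤ _ := h1.trans (h2.trans h3.le)
    _ ≤ 2 * ((k.divisors.card : ℝ) * selbergSum k Q) := by gcongr
    _ = _ := by ring

theorem abs_card_filter_modEq_sub_le {a b r : ℕ} (hab : a ≤ b) (hr : 0 < r) (v : ℕ) :
    |(((Finset.Ico a b).filter fun i => i ≡ v [MOD r]).card : ℝ) - ((b : ℝ) - a) / r| ≤ 1 := by
  have h := Nat.Ico_filter_modEq_card (a := a) (b := b) hr v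
  have hr' : (0 : ℚ) < r := by exact_mod_cast hr
  have hab' : ((a : ℚ) - v) / r ≤ ((b : ℚ) - v) / r := by
    have : (a : ℚ) ≤ b := by exact_mod_cast hab
    gcongr
  have hm := Int.ceil_mono hab'
  rw [max_eq_left (by linarith)] at h
  have h1 := Int.le_ceil (((a : ℚ) - v) / r)
  have h2 := Int.ceil_lt_add_one (((a : ℚ) - v) / r)
  have h3 := Int.le_ceil (((b : ℚ) - v) / r)
  have h4 := Int.ceil_lt_add_one (((b : ℚ) - v) / r)
  have hq : |(((Finset.Ico a b).filter fun i => i ≡ v [MOD r]).card : ℚ) -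
      ((b : ℚ) - a) / r| ≤ 1 := by
    have hc : (((Finset.Ico a b).filter fun i => i ≡ v [MOD r]).card : ℚ) =
        (⌈((b : ℚ) - v) / r⌉ : ℚ) - ⌈((a : ℚ) - v) / r⌉ := by exact_mod_cast h
    have hs : ((b : ℚ) - a) / r = ((b : ℚ) - v) / r - ((a : ℚ) - v) / r := by ring
    rw [hc, hs, abs_le]
    constructor <;> linarith
  have hR := (Rat.cast_le (K := ℝ)).2 hq
  push_cast at hR
  exact hR

theorem abs_card_filter_dvd_sub_le {k Q x n d₁ d₂ : ℕ} (hk : 0 < k)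
    (h₁ : d₁ ∈ sieveModuli k Q) (h₂ : d₂ ∈ sieveModuli k Q) :
    |((((Finset.Ico x (2 * x)).filter fun i => i ≡ n [MOD k]).filter
      fun i => d₁ ∣ i ∧ d₂ ∣ i).card : ℝ) - ((x : ℝ) / k) / (d₁.lcm d₂ : ℕ)| ≤ 1 := by
  have hcop : Nat.Coprime (d₁.lcm d₂) k :=
    Nat.Coprime.coprime_dvd_left (Nat.lcm_dvd_mul d₁ d₂)
      (Nat.Coprime.mul_left (mem_sieveModuli.1 h₁).2.2 (mem_sieveModuli.1 h₂).2.2)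
  have hl : 0 < d₁.lcm d₂ := Nat.lcm_pos (mem_sieveModuli.1 h₁).1.1 (mem_sieveModuli.1 h₂).1.1
  obtain ⟨v, hv1, hv2⟩ := Nat.chineseRemainder hcop.symm n 0
  have hset : (((Finset.Ico x (2 * x)).filter fun i => i ≡ n [MOD k]).filter
      fun i => d₁ ∣ i ∧ d₂ ∣ i) =
      (Finset.Ico x (2 * x)).filter fun i => i ≡ v [MOD k * d₁.lcm d₂] := by
    rw [Finset.filter_filter]
    refine Finset.filter_congr fun i _ => ?_
    rw [← Nat.modEq_and_modEq_iff_modEq_mul hcop.symm, ← Nat.lcm_dvd_iff]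
    refine and_congr ⟨fun h => h.trans hv1.symm, fun h => h.trans hv1⟩ ?_
    rw [← Nat.modEq_zero_iff_dvd]
    exact ⟨fun h => h.trans hv2.symm, fun h => h.trans hv2⟩
  rw [hset]
  have h := abs_card_filter_modEq_sub_le (a := x) (b := 2 * x) (by omega) (Nat.mul_pos hk hl) v
  have e : (((2 * x : ℕ) : ℝ) - x) / (k * d₁.lcm d₂ : ℕ) = ((x : ℝ) / k) / (d₁.lcm d₂ : ℕ) := by
    push_cast
    rw [div_div]
    congr 1
    ring
  rwa [e] at h

theorem sum_inv_prime_modEq_Ico_le {k Q x : ℕ} (n : ℕ) (hk : 0 < k) (hQ : 1 ≤ Q) (hx : Q < x) :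
    ∑ i ∈ Finset.Ico x (2 * x), (if i.Prime ∧ i ≡ n [MOD k] then 1 / (i : ℝ) else 0) ≤
      1 / (k * selbergSum k Q) + (Q : ℝ) ^ 6 / x := by
  set A := (Finset.Ico x (2 * x)).filter fun i => i ≡ n [MOD k] with hA
  set B := (Finset.Ico x (2 * x)).filter fun i => i.Prime ∧ i ≡ n [MOD k] with hB
  have hx0 : (0 : ℝ) < x := by exact_mod_cast (by omega : 0 < x)
  have hk0 : (0 : ℝ) < k := by exact_mod_cast hk
  have hS := one_le_selbergSum (k := k) hQ
  set S := selbergSum k Q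
  have hmain : (B.card : ℝ) * S ^ 2 ≤ ((x : ℝ) / k) * S + (Q : ℝ) ^ 6 := by
    refine card_mul_selbergSum_sq_le hQ A B ?_ ?_ _ fun d₁ h₁ d₂ h₂ =>
      abs_card_filter_dvd_sub_le hk h₁ h₂
    · intro i hi
      simp only [hA, hB, Finset.mem_filter] at hi ⊢
      exact ⟨hi.1, hi.2.2⟩
    · intro i hi q hq
      simp only [hB, Finset.mem_filter, Finset.mem_Ico] at hi
      obtain ⟨⟨hq1, hq2⟩, -⟩ := mem_sieveModuli.1 hq
      exact Nat.coprime_of_lt_prime (by omega) (by omega) hi.2.1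
  have hcard : (B.card : ℝ) ≤ x / (k * S) + (Q : ℝ) ^ 6 := by
    have h1 : (B.card : ℝ) ≤ (((x : ℝ) / k) * S + (Q : ℝ) ^ 6) / S ^ 2 := by
      rw [le_div_iff₀ (by positivity)]; exact hmain
    refine h1.trans ?_
    rw [add_div]
    have e : (x : ℝ) / k * S / S ^ 2 = x / (k * S) := by
      have : S ≠ 0 := by linarith
      field_simp
    rw [e]
    have : (Q : ℝ) ^ 6 / S ^ 2 ≤ (Q : ℝ) ^ 6 := div_le_self (by positivity) (one_le_pow₀ hS)
    linarith
  rw [← Finset.sum_filter]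
  have h2 : ∑ i ∈ B, 1 / (i : ℝ) ≤ B.card * (1 / x) := by
    rw [← nsmul_eq_mul]
    refine Finset.sum_le_card_nsmul _ _ _ fun i hi => ?_
    simp only [hB, Finset.mem_filter, Finset.mem_Ico] at hi
    exact one_div_le_one_div_of_le hx0 (by exact_mod_cast hi.1.1)
  refine h2.trans ?_
  calc (B.card : ℝ) * (1 / x) ≤ (x / (k * S) + (Q : ℝ) ^ 6) * (1 / x) := by gcongr
    _ = _ := by
      have : S ≠ 0 := by linarith
      field_simp

theorem sum_inv_prime_modEq_dyadic_le {k Q x : ℕ} (n : ℕ) (hk : 0 < k) (hQ : 1 ≤ Q)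
    (hx : Q < x) (L : ℕ) :
    ∑ i ∈ Finset.Ico x (x * 2 ^ L), (if i.Prime ∧ i ≡ n [MOD k] then 1 / (i : ℝ) else 0) ≤
      L * (1 / (k * selbergSum k Q) + (Q : ℝ) ^ 6 / x) := by
  induction L with
  | zero => simp
  | succ L ih =>
    have hxL : x ≤ x * 2 ^ L := Nat.le_mul_of_pos_right _ (by positivity)
    have hx0 : (0 : ℝ) < x := by exact_mod_cast (by omega : 0 < x)
    have e : x * 2 ^ (L + 1) = 2 * (x * 2 ^ L) := by ring
    rw [← Finset.sum_Ico_consecutive _ hxL (by omega : x * 2 ^ L ≤ x * 2 ^ (L + 1)), e]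
    have h := sum_inv_prime_modEq_Ico_le n hk hQ (hx.trans_le hxL)
    have h' : (Q : ℝ) ^ 6 / (x * 2 ^ L : ℕ) ≤ (Q : ℝ) ^ 6 / x := by
      have : (x : ℝ) ≤ (x * 2 ^ L : ℕ) := by exact_mod_cast hxL
      gcongr
    push_cast at h h' ⊢
    linarith

theorem sum_inv_prime_modEq_le {n k : ℕ} (hn : 2 ≤ n) (hk : 0 < k)
    (hkn : (k : ℝ) ≤ (n : ℝ) ^ (1 / 8 : ℝ)) :
    ∑ i ∈ (Finset.range (n + 1)).filter (fun i : ℕ => i.Prime ∧ (n : ℝ) ^ (1 / 2 : ℝ) ≤ i),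
      (if i ≡ n [MOD k] then 1 / (i : ℝ) else 0) ≤ 300 * (k.divisors.card : ℝ) / k := by
  have hn1 : (1 : ℝ) < n := by exact_mod_cast (by omega : 1 < n)
  have hn0 : (0 : ℝ) < n := by linarith
  have hk0 : (0 : ℝ) < k := by exact_mod_cast hk
  set Q := ⌊(n : ℝ) ^ (1 / 48 : ℝ)⌋₊ with hQdef
  set x := ⌈(n : ℝ) ^ (1 / 2 : ℝ)⌉₊ with hxdef
  set L := Nat.log 2 n + 1 with hL
  have hQ1 : 1 ≤ Q := (Nat.one_le_floor_iff _).2 (Real.one_le_rpow hn1.le (by norm_num))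
  have hQle : (Q : ℝ) ≤ (n : ℝ) ^ (1 / 48 : ℝ) := Nat.floor_le (by positivity)
  have hxge : (n : ℝ) ^ (1 / 2 : ℝ) ≤ x := Nat.le_ceil _
  have hQx : Q < x := by
    have : (n : ℝ) ^ (1 / 48 : ℝ) < (n : ℝ) ^ (1 / 2 : ℝ) :=
      Real.rpow_lt_rpow_of_exponent_lt hn1 (by norm_num)
    exact_mod_cast (hQle.trans_lt this).trans_le hxge
  have hx0 : (0 : ℝ) < x := by exact_mod_cast (by omega : 0 < x)
  have hS := one_le_selbergSum (k := k) hQ1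
  have hlogS := log_le_mul_selbergSum Q hk.ne'
  set S := selbergSum k Q
  set τ := (k.divisors.card : ℝ)
  have hτ : 1 ≤ τ := by
    have h : 1 ≤ k.divisors.card := Finset.card_pos.2 ⟨1, Nat.one_mem_divisors.2 hk.ne'⟩
    exact Nat.one_le_cast.2 h
  have hlog2 := Real.log_two_gt_d9
  have hlogn : Real.log 2 ≤ Real.log n := Real.log_le_log (by norm_num) (by exact_mod_cast hn)
  have hlogQ : Real.log n ≤ 96 * τ * S := by
    have h1 : Real.log ((n : ℝ) ^ (1 / 48 : ℝ)) ≤ Real.log (Q + 1 : ℕ) := by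
      refine Real.log_le_log (by positivity) ?_
      push_cast
      exact (Nat.lt_floor_add_one _).le
    rw [Real.log_rpow hn0] at h1
    linarith
  have hLle : (L : ℝ) ≤ 3 * Real.log n := by
    have h1 : ((2 : ℝ) ^ Nat.log 2 n) ≤ n := by
      exact_mod_cast Nat.pow_log_le_self 2 (by omega)
    have h2 := Real.log_le_log (by positivity) h1
    rw [Real.log_pow] at h2
    rw [hL]
    push_cast
    nlinarith [Nat.cast_nonneg (α := ℝ) (Nat.log 2 n)]
  have hsub : ∑ i ∈ (Finset.range (n + 1)).filter
        (fun i : ℕ => i.Prime ∧ (n : ℝ) ^ (1 / 2 : ℝ) ≤ i),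
        (if i ≡ n [MOD k] then 1 / (i : ℝ) else 0) ≤
      ∑ i ∈ Finset.Ico x (x * 2 ^ L), (if i.Prime ∧ i ≡ n [MOD k] then 1 / (i : ℝ) else 0) := by
    refine (Finset.sum_le_sum fun i hi => ?_).trans
      (Finset.sum_le_sum_of_subset_of_nonneg ?_ fun i _ _ => ?_)
    · simp only [Finset.mem_filter] at hi
      simp [hi.2.1]
    · intro i hi
      simp only [Finset.mem_filter, Finset.mem_range] at hi
      rw [Finset.mem_Ico]
      refine ⟨Nat.ceil_le.2 hi.2.2, ?_⟩
      calc i ≤ n := by omega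
        _ < 2 ^ L := Nat.lt_pow_succ_log_self (by norm_num) n
        _ ≤ x * 2 ^ L := Nat.le_mul_of_pos_left _ (by omega)
    · split_ifs <;> positivity
  refine (hsub.trans (sum_inv_prime_modEq_dyadic_le n hk hQ1 hQx L)).trans ?_
  have hA : (L : ℝ) * (1 / (k * S)) ≤ 288 * τ / k := by
    rw [mul_one_div, div_le_div_iff₀ (by positivity) hk0]
    have : (L : ℝ) ≤ 288 * τ * S := by linarith
    calc (L : ℝ) * k ≤ 288 * τ * S * k := by gcongr
      _ = _ := by ring
  have hB : (L : ℝ) * ((Q : ℝ) ^ 6 / x) ≤ 12 * τ / k := by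
    have h1 : Real.log n ≤ (n : ℝ) ^ (1 / 4 : ℝ) / (1 / 4) :=
      Real.log_le_rpow_div hn0.le (by norm_num)
    have h2 : (Q : ℝ) ^ 6 ≤ (n : ℝ) ^ (1 / 8 : ℝ) := by
      calc (Q : ℝ) ^ 6 ≤ ((n : ℝ) ^ (1 / 48 : ℝ)) ^ 6 := by gcongr
        _ = (n : ℝ) ^ (1 / 8 : ℝ) := by
          rw [← Real.rpow_natCast, ← Real.rpow_mul hn0.le]; norm_num
    have h3 : (n : ℝ) ^ (1 / 4 : ℝ) * (n : ℝ) ^ (1 / 8 : ℝ) * (n : ℝ) ^ (1 / 8 : ℝ) =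
        (n : ℝ) ^ (1 / 2 : ℝ) := by
      rw [← Real.rpow_add hn0, ← Real.rpow_add hn0]; norm_num
    have h4 : (L : ℝ) ≤ 12 * (n : ℝ) ^ (1 / 4 : ℝ) := by linarith
    rw [← mul_div_assoc, div_le_div_iff₀ hx0 hk0]
    calc (L : ℝ) * (Q : ℝ) ^ 6 * k
        ≤ 12 * (n : ℝ) ^ (1 / 4 : ℝ) * (n : ℝ) ^ (1 / 8 : ℝ) * (n : ℝ) ^ (1 / 8 : ℝ) := by gcongr
      _ = 12 * (n : ℝ) ^ (1 / 2 : ℝ) := by rw [← h3]; ring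
      _ ≤ 12 * 1 * x := by linarith
      _ ≤ 12 * τ * x := by gcongr
  calc (L : ℝ) * (1 / (k * S) + (Q : ℝ) ^ 6 / x)
      = (L : ℝ) * (1 / (k * S)) + (L : ℝ) * ((Q : ℝ) ^ 6 / x) := by ring
    _ ≤ 288 * τ / k + 12 * τ / k := add_le_add hA hB
    _ = _ := by ring

theorem singularSeries_sq_le (m : ℕ) :
    singularSeries m ^ 2 ≤ ∏ p ∈ m.primeFactors, (1 + 6 / (p : ℝ)) := by
  have hfac : ∀ p : {p : ℕ // p.Prime ∧ ¬ p ∣ m},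
      0 ≤ 1 - 1 / ((p : ℕ) - 1 : ℝ) ^ 2 ∧ 1 - 1 / ((p : ℕ) - 1 : ℝ) ^ 2 ≤ 1 := by
    intro p
    have hp : (2 : ℝ) ≤ (p : ℕ) := by exact_mod_cast p.2.1.two_le
    have h1 : (1 : ℝ) ≤ ((p : ℕ) - 1 : ℝ) ^ 2 := one_le_pow₀ (by linarith)
    have h2 : 1 / ((p : ℕ) - 1 : ℝ) ^ 2 ≤ 1 := by
      rw [div_le_one (by linarith)]; exact h1
    have h3 : 0 ≤ 1 / ((p : ℕ) - 1 : ℝ) ^ 2 := by positivity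
    constructor <;> linarith
  have hprod : 0 ≤ (∏' p : {p : ℕ // p.Prime ∧ ¬ p ∣ m}, (1 - 1 / ((p : ℕ) - 1 : ℝ) ^ 2)) ∧
      (∏' p : {p : ℕ // p.Prime ∧ ¬ p ∣ m}, (1 - 1 / ((p : ℕ) - 1 : ℝ) ^ 2)) ≤ 1 := by
    by_cases hm : Multipliable fun p : {p : ℕ // p.Prime ∧ ¬ p ∣ m} =>
        (1 - 1 / ((p : ℕ) - 1 : ℝ) ^ 2)
    · have ht : Filter.Tendsto (fun s : Finset {p : ℕ // p.Prime ∧ ¬ p ∣ m} =>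
          ∏ p ∈ s, (1 - 1 / ((p : ℕ) - 1 : ℝ) ^ 2)) Filter.atTop _ := hm.hasProd
      exact ⟨ge_of_tendsto' ht fun s => Finset.prod_nonneg fun p _ => (hfac p).1,
        le_of_tendsto' ht fun s =>
          Finset.prod_le_one (fun p _ => (hfac p).1) fun p _ => (hfac p).2⟩
    · rw [tprod_eq_one_of_not_multipliable hm]
      exact ⟨zero_le_one, le_rfl⟩
  have hp2 : ∀ p ∈ m.primeFactors, (2 : ℝ) ≤ p := fun p hp => by
    exact_mod_cast (Nat.prime_of_mem_primeFactors hp).two_le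
  unfold singularSeries
  rw [mul_pow]
  calc _ ≤ 1 * (∏ p ∈ m.primeFactors, (1 + 1 / ((p : ℝ) - 1))) ^ 2 := by
        gcongr
        exact pow_le_one₀ hprod.1 hprod.2
    _ = ∏ p ∈ m.primeFactors, (1 + 1 / ((p : ℝ) - 1)) ^ 2 := by rw [one_mul, Finset.prod_pow]
    _ ≤ _ := by
      refine Finset.prod_le_prod (fun p _ => sq_nonneg _) fun p hp => ?_
      have h := hp2 p hp
      have h1 : (0 : ℝ) < p - 1 := by linarith
      have h0 : (0 : ℝ) < p := by linarith
      have e1 : 1 + 1 / ((p : ℝ) - 1) = p / (p - 1) := by field_simp; ring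
      have e2 : 1 + 6 / (p : ℝ) = (p + 6) / p := by field_simp
      rw [e1, e2, div_pow, div_le_div_iff₀ (by positivity) h0]
      nlinarith [mul_nonneg (sub_nonneg.2 h) h0.le]

theorem prod_primeFactors_le {n m : ℕ} (hn : 2 ≤ n) (hm : m ≠ 0) (hmn : m ≤ n) :
    ∏ p ∈ m.primeFactors, (1 + 6 / (p : ℝ)) ≤
      Real.exp 192 * ∏ p ∈ m.primeFactors with p ≤ ⌊Real.log n / 16⌋₊, (1 + 6 / (p : ℝ)) := by
  have hlog : 0 < Real.log n := Real.log_pos (by exact_mod_cast (by omega : 1 < n))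
  rw [← Finset.prod_filter_not_mul_prod_filter m.primeFactors
    (fun p => p ≤ ⌊Real.log n / 16⌋₊)]
  refine mul_le_mul_of_nonneg_right ?_ (Finset.prod_nonneg fun p _ => by positivity)
  refine (Real.prod_one_add_le_exp_sum _ fun p => by positivity).trans ?_
  rw [Real.exp_le_exp]
  have hcard : (m.primeFactors.card : ℝ) ≤ 2 * Real.log n := by
    have h1 : 2 ^ m.primeFactors.card ≤ n :=
      calc 2 ^ m.primeFactors.card ≤ ∏ p ∈ m.primeFactors, p :=
            Finset.pow_card_le_prod _ _ _ fun p hp => (Nat.prime_of_mem_primeFactors hp).two_le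
        _ ≤ m := Nat.le_of_dvd (Nat.pos_of_ne_zero hm) (Nat.prod_primeFactors_dvd m)
        _ ≤ n := hmn
    have h2 : ((2 : ℝ) ^ m.primeFactors.card) ≤ n := by exact_mod_cast h1
    have h3 := Real.log_le_log (by positivity) h2
    rw [Real.log_pow] at h3
    nlinarith [Real.log_two_gt_d9, Nat.cast_nonneg (α := ℝ) m.primeFactors.card]
  have hterm : ∀ p ∈ m.primeFactors.filter (fun p => ¬ p ≤ ⌊Real.log n / 16⌋₊),
      6 / (p : ℝ) ≤ 96 / Real.log n := by
    intro p hp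
    have h1 : Real.log n / 16 < p :=
      (Nat.floor_lt (by positivity)).1 (not_le.1 (Finset.mem_filter.1 hp).2)
    rw [div_le_div_iff₀ (by linarith [div_pos hlog (by norm_num : (0 : ℝ) < 16)]) hlog]
    linarith
  refine (Finset.sum_le_card_nsmul _ _ _ hterm).trans ?_
  rw [nsmul_eq_mul, ← mul_div_assoc, div_le_iff₀ hlog]
  have : ((m.primeFactors.filter (fun p => ¬ p ≤ ⌊Real.log n / 16⌋₊)).card : ℝ) ≤
      m.primeFactors.card := by exact_mod_cast Finset.card_filter_le _ _
  linarith

theorem prod_one_add_le_sum_powerset {m : ℕ} (T : Finset ℕ) (hT : ∀ p ∈ T, p.Prime) :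
    ∏ p ∈ T with p ∣ m, (1 + 6 / (p : ℝ)) ≤
      ∑ t ∈ T.powerset, if (∏ p ∈ t, p) ∣ m then ∏ p ∈ t, (6 / (p : ℝ)) else 0 := by
  rw [Finset.prod_one_add, ← Finset.sum_filter]
  refine Finset.sum_le_sum_of_subset_of_nonneg (fun t ht => ?_)
    fun t _ _ => Finset.prod_nonneg fun p _ => by positivity
  rw [Finset.mem_powerset] at ht
  rw [Finset.mem_filter, Finset.mem_powerset]
  refine ⟨ht.trans (Finset.filter_subset _ _), ?_⟩
  exact Finset.prod_primes_dvd m (fun p hp => (hT p (Finset.filter_subset _ _ (ht hp))).prime)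
    fun p hp => (Finset.mem_filter.1 (ht hp)).2

theorem card_divisors_prod_primes (t : Finset ℕ) (ht : ∀ p ∈ t, p.Prime) :
    (∏ p ∈ t, p).divisors.card = 2 ^ t.card := by
  have h0 : ∏ p ∈ t, p ≠ 0 := Finset.prod_ne_zero_iff.2 fun p hp => (ht p hp).ne_zero
  rw [Nat.card_divisors h0, Nat.primeFactors_prod ht, Finset.prod_congr rfl (g := fun _ => 2)]
  · simp
  · intro p hp
    rw [Nat.factorization_prod_apply fun q hq => (ht q hq).ne_zero,
      Finset.sum_eq_single_of_mem p hp]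
    · rw [(ht p hp).factorization_self]
    · intro q hq hqp
      exact Nat.factorization_eq_zero_of_not_dvd fun h =>
        hqp ((Nat.prime_dvd_prime_iff_eq (ht p hp) (ht q hq)).1 h).symm

theorem prod_primes_le_rpow {n : ℕ} (hn : 2 ≤ n) {t : Finset ℕ}
    (ht : t ⊆ (Finset.range (⌊Real.log n / 16⌋₊ + 1)).filter Nat.Prime) :
    ((∏ p ∈ t, p : ℕ) : ℝ) ≤ (n : ℝ) ^ (1 / 8 : ℝ) := by
  have hn0 : (0 : ℝ) < n := by exact_mod_cast (by omega : 0 < n)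
  have hlog : 0 < Real.log n := Real.log_pos (by exact_mod_cast (by omega : 1 < n))
  set w := ⌊Real.log n / 16⌋₊
  have hw : (w : ℝ) ≤ Real.log n / 16 := Nat.floor_le (by positivity)
  have h1 : ∏ p ∈ t, p ≤ 4 ^ w := by
    refine le_trans ?_ (primorial_le_four_pow w)
    exact Finset.prod_le_prod_of_subset_of_one_le' ht
      fun p hp _ => (Finset.mem_filter.1 hp).2.one_le
  have h2 : ((∏ p ∈ t, p : ℕ) : ℝ) ≤ (4 : ℝ) ^ w := by exact_mod_cast h1
  refine h2.trans ?_
  rw [Real.rpow_def_of_pos hn0, ← Real.log_le_iff_le_exp (by positivity), Real.log_pow]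
  have h4 : Real.log 4 ≤ 2 := by
    have : Real.log 4 = 2 * Real.log 2 := by
      rw [show (4 : ℝ) = 2 ^ 2 by norm_num, Real.log_pow]; norm_num
    linarith [Real.log_two_lt_d9]
  nlinarith [Real.log_nonneg (by norm_num : (1 : ℝ) ≤ 4)]

theorem prod_one_add_inv_sq_le (w : ℕ) :
    ∏ p ∈ (Finset.range (w + 1)).filter Nat.Prime, (1 + 12 / (p : ℝ) ^ 2) ≤ Real.exp 24 := by
  refine (Real.prod_one_add_le_exp_sum _ fun p => by positivity).trans ?_
  rw [Real.exp_le_exp]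
  have h1 : (Finset.range (w + 1)).filter Nat.Prime ⊆ Finset.Ioo 0 (w + 1) := by
    intro p hp
    simp only [Finset.mem_filter, Finset.mem_range, Finset.mem_Ioo] at hp ⊢
    exact ⟨hp.2.pos, hp.1⟩
  have h2 := sum_Ioo_inv_sq_le (α := ℝ) 0 (w + 1)
  calc ∑ p ∈ (Finset.range (w + 1)).filter Nat.Prime, 12 / (p : ℝ) ^ 2
      ≤ ∑ p ∈ Finset.Ioo 0 (w + 1), 12 / (p : ℝ) ^ 2 :=
        Finset.sum_le_sum_of_subset_of_nonneg h1 fun p _ _ => by positivity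
    _ = 12 * ∑ p ∈ Finset.Ioo 0 (w + 1), ((p : ℝ) ^ 2)⁻¹ := by
        rw [Finset.mul_sum]; simp only [div_eq_mul_inv]
    _ ≤ 24 := by norm_num at h2; linarith

theorem singularSeries_sq_le_sum_powerset {n m : ℕ} (hn : 2 ≤ n) (hm : m ≠ 0) (hmn : m ≤ n) :
    singularSeries m ^ 2 ≤ Real.exp 192 *
      ∑ t ∈ ((Finset.range (⌊Real.log n / 16⌋₊ + 1)).filter Nat.Prime).powerset,
        if (∏ p ∈ t, p) ∣ m then ∏ p ∈ t, (6 / (p : ℝ)) else 0 := by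
  refine (singularSeries_sq_le m).trans ((prod_primeFactors_le hn hm hmn).trans ?_)
  refine mul_le_mul_of_nonneg_left ?_ (Real.exp_pos _).le
  refine le_trans (le_of_eq ?_) (prod_one_add_le_sum_powerset _ fun p hp => (Finset.mem_filter.1 hp).2)
  refine Finset.prod_congr ?_ fun _ _ => rfl
  ext p
  simp only [Finset.mem_filter, Nat.mem_primeFactors, Finset.mem_range, Nat.lt_succ_iff]
  tauto

/-- For every `ε ∈ (0, 1/4)` there are `C > 0` and `n₀` such that for all `n ≥ n₀`,
with `M = n^{1-2ε}`, one has `∑_{i prime, M ≤ i ≤ n - n^{1-ε}} C(n-i)²/i ≤ C`. -/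
theorem sum_singularSeries_sq_div_prime_bounded
    (ε : ℝ) (hε0 : 0 < ε) (hε1 : ε < 1 / 4) :
    ∃ (C : ℝ) (n₀ : ℕ), 0 < C ∧ ∀ n : ℕ, n₀ ≤ n →
      ∑ i ∈ (Finset.range (n + 1)).filter
          (fun i => Nat.Prime i ∧ (n : ℝ) ^ (1 - 2 * ε) ≤ (i : ℝ) ∧
            (i : ℝ) ≤ (n : ℝ) - (n : ℝ) ^ (1 - ε)),
        singularSeries (n - i) ^ 2 / (i : ℝ) ≤ C := by
  refine ⟨Real.exp 192 * (300 * Real.exp 24), 2, by positivity, fun n hn => ?_⟩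
  have hn1 : (1 : ℝ) < n := by exact_mod_cast (by omega : 1 < n)
  set T := (Finset.range (⌊Real.log n / 16⌋₊ + 1)).filter Nat.Prime with hTdef
  set I := (Finset.range (n + 1)).filter (fun i : ℕ => i.Prime ∧ (n : ℝ) ^ (1 / 2 : ℝ) ≤ i)
    with hIdef
  have hT : ∀ t ∈ T.powerset, ∀ p ∈ t, p.Prime := fun t ht p hp =>
    (Finset.mem_filter.1 (Finset.mem_powerset.1 ht hp)).2
  have hterm : ∀ i ∈ (Finset.range (n + 1)).filter
      (fun i => Nat.Prime i ∧ (n : ℝ) ^ (1 - 2 * ε) ≤ (i : ℝ) ∧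
        (i : ℝ) ≤ (n : ℝ) - (n : ℝ) ^ (1 - ε)),
      singularSeries (n - i) ^ 2 / (i : ℝ) ≤ Real.exp 192 *
        ∑ t ∈ T.powerset, (∏ p ∈ t, (6 / (p : ℝ))) *
          if i ≡ n [MOD ∏ p ∈ t, p] then 1 / (i : ℝ) else 0 := by
    intro i hi
    simp only [Finset.mem_filter, Finset.mem_range] at hi
    obtain ⟨-, -, -, hi⟩ := hi
    have hpos : (0 : ℝ) < (n : ℝ) ^ (1 - ε) := by positivity
    have hin : i < n := by exact_mod_cast (by linarith : (i : ℝ) < n)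
    have h := singularSeries_sq_le_sum_powerset hn (by omega : n - i ≠ 0) (Nat.sub_le n i)
    refine (div_le_div_of_nonneg_right h (Nat.cast_nonneg i)).trans (le_of_eq ?_)
    rw [mul_div_assoc, Finset.sum_div]
    congr 1
    refine Finset.sum_congr rfl fun t _ => ?_
    have hiff := Nat.modEq_iff_dvd' (n := ∏ p ∈ t, p) hin.le
    by_cases hd : (∏ p ∈ t, p) ∣ n - i
    · rw [if_pos hd, if_pos (hiff.2 hd), mul_one_div]
    · rw [if_neg hd, if_neg (mt hiff.1 hd), zero_div, mul_zero]
  have hsub : (Finset.range (n + 1)).filter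
      (fun i => Nat.Prime i ∧ (n : ℝ) ^ (1 - 2 * ε) ≤ (i : ℝ) ∧
        (i : ℝ) ≤ (n : ℝ) - (n : ℝ) ^ (1 - ε)) ⊆ I := by
    intro i hi
    simp only [hIdef, Finset.mem_filter] at hi ⊢
    exact ⟨hi.1, hi.2.1, (Real.rpow_le_rpow_of_exponent_le hn1.le (by linarith)).trans hi.2.2.1⟩
  have hnonneg : ∀ i : ℕ, ∀ t : Finset ℕ, 0 ≤ (∏ p ∈ t, (6 / (p : ℝ))) *
      if i ≡ n [MOD ∏ p ∈ t, p] then 1 / (i : ℝ) else 0 := fun i t =>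
    mul_nonneg (Finset.prod_nonneg fun p _ => by positivity) (by split_ifs <;> positivity)
  refine (Finset.sum_le_sum hterm).trans ((Finset.sum_le_sum_of_subset_of_nonneg hsub
    fun i _ _ => mul_nonneg (Real.exp_pos _).le
      (Finset.sum_nonneg fun t _ => hnonneg i t)).trans ?_)
  rw [← Finset.mul_sum, Finset.sum_comm]
  refine mul_le_mul_of_nonneg_left ?_ (Real.exp_pos _).le
  calc ∑ t ∈ T.powerset, ∑ i ∈ I, (∏ p ∈ t, (6 / (p : ℝ))) *
          (if i ≡ n [MOD ∏ p ∈ t, p] then 1 / (i : ℝ) else 0)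
      ≤ ∑ t ∈ T.powerset, 300 * ∏ p ∈ t, (12 / (p : ℝ) ^ 2) := by
        refine Finset.sum_le_sum fun t ht => ?_
        rw [← Finset.mul_sum]
        have hk : 0 < ∏ p ∈ t, p := Finset.prod_pos fun p hp => (hT t ht p hp).pos
        have h := sum_inv_prime_modEq_le hn hk (prod_primes_le_rpow hn (Finset.mem_powerset.1 ht))
        rw [card_divisors_prod_primes t (hT t ht)] at h
        refine (mul_le_mul_of_nonneg_left h
          (Finset.prod_nonneg fun p _ => by positivity)).trans (le_of_eq ?_)
        rw [Finset.prod_div_distrib, Finset.prod_div_distrib, Finset.prod_const,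
          Finset.prod_const, Finset.prod_pow, Nat.cast_prod]
        have e : (12 : ℝ) ^ t.card = 6 ^ t.card * 2 ^ t.card := by
          rw [← mul_pow]; norm_num
        rw [e]
        push_cast
        ring
    _ = 300 * ∏ p ∈ T, (1 + 12 / (p : ℝ) ^ 2) := by
        rw [← Finset.mul_sum, Finset.prod_one_add]
    _ ≤ 300 * Real.exp 24 := by
        have := prod_one_add_inv_sq_le ⌊Real.log n / 16⌋₊
        linarith
end
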